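/- (Adequacy of convex DPO rewriting) Let Σ be a monoidal signature and R a rewriting system on Σ-terms, i.e. a set of pairs of Σ-terms (l, r) with l, r : i → j. For Σ-terms d, e : n → m, the syntactic rewriting d ⇒_R e holds if and only if the interfaced hypergraph D ← n+m (obtained from the interpretation ⟦d⟧ = (n → D ← m) by combining the two legs into a single map n+m → D) rewrites convexly to E ← n+m (obtained likewise from ⟦e⟧) via the DPO rule L ← i+j → R_g obtained from ⟦l⟧ = (i → L ← j) and ⟦r⟧ = (i → R_g ← j) for some (l,r) in R. -/

import Mathlib

namespace SDRT

/-- A directed hypergraph: a set of nodes and, for each hyperedge, an ordered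
list of source nodes and an ordered list of target nodes.  A `(k,l)`-hyperedge
is a hyperedge with `k` sources and `l` targets. -/
structure Hyp : Type 1 where
  V : Type
  E : Type
  src : E → List V
  tgt : E → List V

namespace Hyp

/-- The set of pairs `(h, i)` such that `v` is the `i`-th target of the hyperedge `h`.
The in-degree of `v` is the number of such pairs. -/
def inPairs (G : Hyp) (v : G.V) : Set (G.E × ℕ) := {p | (G.tgt p.1)[p.2]? = some v}

/-- The set of pairs `(h, j)` such that `v` is the `j`-th source of the hyperedge `h`.
The out-degree of `v` is the number of such pairs. -/
def outPairs (G : Hyp) (v : G.V) : Set (G.E × ℕ) := {p | (G.src p.1)[p.2]? = some v}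

/-- `v` has in-degree `0`. -/
def inDegZero (G : Hyp) (v : G.V) : Prop := G.inPairs v = ∅

/-- `v` has in-degree `1`. -/
def inDegOne (G : Hyp) (v : G.V) : Prop := ∃! p, p ∈ G.inPairs v

/-- `v` has out-degree `0`. -/
def outDegZero (G : Hyp) (v : G.V) : Prop := G.outPairs v = ∅

/-- `v` has out-degree `1`. -/
def outDegOne (G : Hyp) (v : G.V) : Prop := ∃! p, p ∈ G.outPairs v

/-- `h'` is a successor of `h` if some node is both a target of `h` and a source of `h'`. -/
def Successor (G : Hyp) (h h' : G.E) : Prop := ∃ v, v ∈ G.tgt h ∧ v ∈ G.src h'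

/-- `l` is a path (nonempty sequence of hyperedges, each a successor of the previous)
from the node `v` to the node `v'`: `v` is among the sources of the first hyperedge
and `v'` among the targets of the last one. -/
def PathFrom (G : Hyp) (l : List G.E) (v v' : G.V) : Prop :=
  ∃ hne : l ≠ [], l.Chain' G.Successor ∧ v ∈ G.src (l.head hne) ∧ v' ∈ G.tgt (l.getLast hne)

/-- `l` is a path from the hyperedge `h` to the hyperedge `h'`. -/
def EdgePath (G : Hyp) (l : List G.E) (h h' : G.E) : Prop :=
  ∃ hne : l ≠ [], l.Chain' G.Successor ∧ l.head hne = h ∧ l.getLast hne = h'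

/-- A hypergraph is acyclic if there is no path from a node to itself. -/
def Acyclic (G : Hyp) : Prop := ∀ (v : G.V) (l : List G.E), ¬ G.PathFrom l v v

end Hyp

/-- A subhypergraph: a set of nodes and hyperedges closed under taking the sources
and targets of its hyperedges. -/
structure SubHyp (G : Hyp) where
  nodes : Set G.V
  edges : Set G.E
  src_mem : ∀ e ∈ edges, ∀ v ∈ G.src e, v ∈ nodes
  tgt_mem : ∀ e ∈ edges, ∀ v ∈ G.tgt e, v ∈ nodes

/-- A subhypergraph `H` of `G` is convex if every path in `G` between nodes of `H`
consists only of hyperedges of `H`. -/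
def SubHyp.Convex {G : Hyp} (H : SubHyp G) : Prop :=
  ∀ v ∈ H.nodes, ∀ v' ∈ H.nodes, ∀ l, G.PathFrom l v v' → ∀ e ∈ l, e ∈ H.edges

/-- The hypergraph underlying a subhypergraph. -/
def SubHyp.toHyp {G : Hyp} (H : SubHyp G) : Hyp where
  V := H.nodes
  E := H.edges
  src := fun e => (G.src e.1).pmap (fun v hv => (⟨v, hv⟩ : H.nodes))
    (fun v hv => H.src_mem e.1 e.2 v hv)
  tgt := fun e => (G.tgt e.1).pmap (fun v hv => (⟨v, hv⟩ : H.nodes))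
    (fun v hv => H.tgt_mem e.1 e.2 v hv)

/-- A cospan of hypergraphs with discrete interfaces `m → G ← n`. -/
structure Cospan (m n : Type) : Type 1 where
  G : Hyp
  inp : m → G.V
  out : n → G.V

namespace Cospan

/-- A cospan is monogamous if both legs are injective, nodes in the image of the
input leg have in-degree 0, all other nodes have in-degree 1, nodes in the image
of the output leg have out-degree 0, and all other nodes have out-degree 1. -/
def Monogamous {m n : Type} (A : Cospan m n) : Prop :=
  Function.Injective A.inp ∧ Function.Injective A.out ∧
  (∀ v ∈ Set.range A.inp, A.G.inDegZero v) ∧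
  (∀ v ∉ Set.range A.inp, A.G.inDegOne v) ∧
  (∀ v ∈ Set.range A.out, A.G.outDegZero v) ∧
  (∀ v ∉ Set.range A.out, A.G.outDegOne v)

/-- A cospan is acyclic if its carrier is. -/
def Acyclic {m n : Type} (A : Cospan m n) : Prop := A.G.Acyclic

/-- Composition of cospans by pushout: glue `G` and `H` along the common
interface `n`, identifying `A.out k` with `B.inp k` for every `k : n`. -/
def comp {m n p : Type} (A : Cospan m n) (B : Cospan n p) : Cospan m p where
  G := { V := Quot (fun x y : A.G.V ⊕ B.G.V =>
                      ∃ k : n, x = Sum.inl (A.out k) ∧ y = Sum.inr (B.inp k))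
         E := A.G.E ⊕ B.G.E
         src := Sum.elim (fun e => (A.G.src e).map (fun v => Quot.mk _ (Sum.inl v)))
                         (fun e => (B.G.src e).map (fun v => Quot.mk _ (Sum.inr v)))
         tgt := Sum.elim (fun e => (A.G.tgt e).map (fun v => Quot.mk _ (Sum.inl v)))
                         (fun e => (B.G.tgt e).map (fun v => Quot.mk _ (Sum.inr v))) }
  inp := fun x => Quot.mk _ (Sum.inl (A.inp x))
  out := fun y => Quot.mk _ (Sum.inr (B.out y))

/-- Monoidal product (tensor) of cospans: disjoint union of the carriers, with
the evident interface maps. -/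
def tensor {m₁ n₁ m₂ n₂ : Type} (A : Cospan m₁ n₁) (B : Cospan m₂ n₂) :
    Cospan (m₁ ⊕ m₂) (n₁ ⊕ n₂) where
  G := { V := A.G.V ⊕ B.G.V
         E := A.G.E ⊕ B.G.E
         src := Sum.elim (fun e => (A.G.src e).map Sum.inl) (fun e => (B.G.src e).map Sum.inr)
         tgt := Sum.elim (fun e => (A.G.tgt e).map Sum.inl) (fun e => (B.G.tgt e).map Sum.inr) }
  inp := Sum.elim (fun x => Sum.inl (A.inp x)) (fun x => Sum.inr (B.inp x))
  out := Sum.elim (fun y => Sum.inl (A.out y)) (fun y => Sum.inr (B.out y))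

/-- The identity cospan on `k`: the discrete hypergraph on `k` with identity legs. -/
def idCospan (k : Type) : Cospan k k where
  G := { V := k, E := Empty, src := Empty.elim, tgt := Empty.elim }
  inp := id
  out := id

end Cospan

/-- An isomorphism of cospans: a hypergraph isomorphism of the carriers commuting
with the interface legs. -/
structure CospanIso {m n : Type} (A B : Cospan m n) where
  nodeEquiv : A.G.V ≃ B.G.V
  edgeEquiv : A.G.E ≃ B.G.E
  src_eq : ∀ e, B.G.src (edgeEquiv e) = (A.G.src e).map nodeEquiv
  tgt_eq : ∀ e, B.G.tgt (edgeEquiv e) = (A.G.tgt e).map nodeEquiv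
  inp_eq : ∀ x, nodeEquiv (A.inp x) = B.inp x
  out_eq : ∀ y, nodeEquiv (A.out y) = B.out y

/-- Two cospans are isomorphic if there is an isomorphism between them. -/
def Cospan.Isomorphic {m n : Type} (A B : Cospan m n) : Prop := Nonempty (CospanIso A B)

/-- A homomorphism of hypergraphs: maps nodes to nodes and hyperedges to
hyperedges, preserving the ordered lists of sources and targets. -/
structure HypHom (G H : Hyp) where
  nodeMap : G.V → H.V
  edgeMap : G.E → H.E
  src_eq : ∀ e, H.src (edgeMap e) = (G.src e).map nodeMap
  tgt_eq : ∀ e, H.tgt (edgeMap e) = (G.tgt e).map nodeMap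

/-- The image of a hypergraph homomorphism, as a subhypergraph of the codomain. -/
def HypHom.image {G H : Hyp} (f : HypHom G H) : SubHyp H where
  nodes := Set.range f.nodeMap
  edges := Set.range f.edgeMap
  src_mem := by
    rintro e ⟨e', rfl⟩ v hv
    rw [f.src_eq] at hv
    rcases List.mem_map.mp hv with ⟨w, -, rfl⟩
    exact ⟨w, rfl⟩
  tgt_mem := by
    rintro e ⟨e', rfl⟩ v hv
    rw [f.tgt_eq] at hv
    rcases List.mem_map.mp hv with ⟨w, -, rfl⟩
    exact ⟨w, rfl⟩

/-! ### Labelled hypergraphs -/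

/-- A monoidal signature: a set of operation symbols, each with an arity and a
coarity. -/
structure MonSig : Type 1 where
  ops : Type
  ar : ops → ℕ
  coar : ops → ℕ

/-- A `Σ`-labelled hypergraph: each hyperedge carries a label whose arity and
coarity match the numbers of sources and targets of the hyperedge. -/
structure LHyp (S : MonSig) extends Hyp where
  label : E → S.ops
  src_len : ∀ e, (src e).length = S.ar (label e)
  tgt_len : ∀ e, (tgt e).length = S.coar (label e)

/-- A homomorphism of `Σ`-labelled hypergraphs. -/
structure LHom {S : MonSig} (G H : LHyp S) where
  nodeMap : G.V → H.V
  edgeMap : G.E → H.E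
  src_eq : ∀ e, H.src (edgeMap e) = (G.src e).map nodeMap
  tgt_eq : ∀ e, H.tgt (edgeMap e) = (G.tgt e).map nodeMap
  label_eq : ∀ e, H.label (edgeMap e) = G.label e

/-- Composition (diagrammatic order) of homomorphisms. -/
def LHom.comp {S : MonSig} {G H K : LHyp S} (f : LHom G H) (g : LHom H K) : LHom G K where
  nodeMap := g.nodeMap ∘ f.nodeMap
  edgeMap := g.edgeMap ∘ f.edgeMap
  src_eq := by intro e; simp only [Function.comp_apply, g.src_eq, f.src_eq, List.map_map]
  tgt_eq := by intro e; simp only [Function.comp_apply, g.tgt_eq, f.tgt_eq, List.map_map]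
  label_eq := by intro e; simp only [Function.comp_apply, g.label_eq, f.label_eq]

/-- The underlying homomorphism of unlabelled hypergraphs. -/
def LHom.toHypHom {S : MonSig} {G H : LHyp S} (f : LHom G H) : HypHom G.toHyp H.toHyp :=
  ⟨f.nodeMap, f.edgeMap, f.src_eq, f.tgt_eq⟩

/-- The discrete `Σ`-labelled hypergraph on a set `I` of nodes (no hyperedges). -/
def discreteLHyp (S : MonSig) (I : Type) : LHyp S where
  V := I
  E := Empty
  src := Empty.elim
  tgt := Empty.elim
  label := fun e => e.elim
  src_len := fun e => e.elim
  tgt_len := fun e => e.elim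

/-- A homomorphism out of a discrete hypergraph is just a function on nodes. -/
def discreteHom {S : MonSig} {I : Type} (C : LHyp S) (c : I → C.V) :
    LHom (discreteLHyp S I) C where
  nodeMap := c
  edgeMap := Empty.elim
  src_eq := fun e => e.elim
  tgt_eq := fun e => e.elim
  label_eq := fun e => e.elim

/-- The square `f ; inA = g ; inB` is a pushout of `Σ`-labelled hypergraphs. -/
def IsPushout {S : MonSig} {X A B P : LHyp S} (f : LHom X A) (g : LHom X B)
    (inA : LHom A P) (inB : LHom B P) : Prop :=
  f.comp inA = g.comp inB ∧
  ∀ (W : LHyp S) (u : LHom A W) (w : LHom B W), f.comp u = g.comp w →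
    ∃! t : LHom P W, inA.comp t = u ∧ inB.comp t = w

/-- A cospan of `Σ`-labelled hypergraphs with discrete interfaces. -/
structure LCospan (S : MonSig) (m n : Type) : Type 1 where
  G : LHyp S
  inp : m → G.V
  out : n → G.V

namespace LCospan

/-- The underlying unlabelled cospan. -/
def toCospan {S : MonSig} {m n : Type} (A : LCospan S m n) : Cospan m n :=
  ⟨A.G.toHyp, A.inp, A.out⟩

def Monogamous {S : MonSig} {m n : Type} (A : LCospan S m n) : Prop := A.toCospan.Monogamous

def Acyclic {S : MonSig} {m n : Type} (A : LCospan S m n) : Prop := A.G.toHyp.Acyclic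

/-- Composition of labelled cospans by pushout (gluing along the common interface). -/
def comp {S : MonSig} {m n p : Type} (A : LCospan S m n) (B : LCospan S n p) :
    LCospan S m p where
  G := { V := Quot (fun x y : A.G.V ⊕ B.G.V =>
                      ∃ k : n, x = Sum.inl (A.out k) ∧ y = Sum.inr (B.inp k))
         E := A.G.E ⊕ B.G.E
         src := Sum.elim (fun e => (A.G.src e).map (fun v => Quot.mk _ (Sum.inl v)))
                         (fun e => (B.G.src e).map (fun v => Quot.mk _ (Sum.inr v)))
         tgt := Sum.elim (fun e => (A.G.tgt e).map (fun v => Quot.mk _ (Sum.inl v)))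
                         (fun e => (B.G.tgt e).map (fun v => Quot.mk _ (Sum.inr v)))
         label := Sum.elim A.G.label B.G.label
         src_len := by rintro (e | e) <;> simp [A.G.src_len, B.G.src_len]
         tgt_len := by rintro (e | e) <;> simp [A.G.tgt_len, B.G.tgt_len] }
  inp := fun x => Quot.mk _ (Sum.inl (A.inp x))
  out := fun y => Quot.mk _ (Sum.inr (B.out y))

/-- Monoidal product (disjoint union) of labelled cospans. -/
def tensor {S : MonSig} {m₁ n₁ m₂ n₂ : Type} (A : LCospan S m₁ n₁) (B : LCospan S m₂ n₂) :
    LCospan S (m₁ ⊕ m₂) (n₁ ⊕ n₂) where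
  G := { V := A.G.V ⊕ B.G.V
         E := A.G.E ⊕ B.G.E
         src := Sum.elim (fun e => (A.G.src e).map Sum.inl) (fun e => (B.G.src e).map Sum.inr)
         tgt := Sum.elim (fun e => (A.G.tgt e).map Sum.inl) (fun e => (B.G.tgt e).map Sum.inr)
         label := Sum.elim A.G.label B.G.label
         src_len := by rintro (e | e) <;> simp [A.G.src_len, B.G.src_len]
         tgt_len := by rintro (e | e) <;> simp [A.G.tgt_len, B.G.tgt_len] }
  inp := Sum.elim (fun x => Sum.inl (A.inp x)) (fun x => Sum.inr (B.inp x))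
  out := Sum.elim (fun y => Sum.inl (A.out y)) (fun y => Sum.inr (B.out y))

/-- Reindexing of the interfaces of a cospan along functions. -/
def reind {S : MonSig} {m n m' n' : Type} (A : LCospan S m n) (f : m' → m) (g : n' → n) :
    LCospan S m' n' :=
  ⟨A.G, A.inp ∘ f, A.out ∘ g⟩

end LCospan

/-- An isomorphism of labelled cospans. -/
structure LCospanIso {S : MonSig} {m n : Type} (A B : LCospan S m n) where
  nodeEquiv : A.G.V ≃ B.G.V
  edgeEquiv : A.G.E ≃ B.G.E
  src_eq : ∀ e, B.G.src (edgeEquiv e) = (A.G.src e).map nodeEquiv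
  tgt_eq : ∀ e, B.G.tgt (edgeEquiv e) = (A.G.tgt e).map nodeEquiv
  label_eq : ∀ e, B.G.label (edgeEquiv e) = A.G.label e
  inp_eq : ∀ x, nodeEquiv (A.inp x) = B.inp x
  out_eq : ∀ y, nodeEquiv (A.out y) = B.out y

/-- `A` is a monogamous acyclic cospan. -/
def MonAcyclic {S : MonSig} {m n : Type} (A : LCospan S m n) : Prop :=
  A.Monogamous ∧ A.Acyclic

/-- `(C, c, g)` is a pushout complement of the mono `f : L → G` along the
interface `i + j → L` of the rule. -/
def IsPushoutComplement {S : MonSig} {i j n m : Type} (L : LCospan S i j) (Gc : LCospan S n m)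
    (f : LHom L.G Gc.G) (C : LHyp S) (c : i ⊕ j → C.V) (g : LHom C Gc.G) : Prop :=
  IsPushout (discreteHom L.G (Sum.elim L.inp L.out)) (discreteHom C c) f g

/-- `(C, c, g)` is a boundary complement: a pushout complement in which `c` is mono
and there are `d₁ : n → C`, `d₂ : m → C` commuting with the interface of `G` such
that the cospan `j + n → C ← m + i` is monogamous. -/
def IsBoundaryComplement {S : MonSig} {i j n m : Type} (L : LCospan S i j) (Gc : LCospan S n m)
    (f : LHom L.G Gc.G) (C : LHyp S) (c : i ⊕ j → C.V) (g : LHom C Gc.G) : Prop :=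
  IsPushoutComplement L Gc f C c g ∧ Function.Injective c ∧
  ∃ (d₁ : n → C.V) (d₂ : m → C.V),
    (∀ x, g.nodeMap (d₁ x) = Gc.inp x) ∧ (∀ y, g.nodeMap (d₂ y) = Gc.out y) ∧
    (LCospan.mk C (Sum.elim (fun y : j => c (Sum.inr y)) d₁)
                  (Sum.elim d₂ (fun x : i => c (Sum.inl x)))).Monogamous

/-- A convex DPO rewriting step from `D ← n+m` to `E ← n+m` using the rule
`L ← i+j → R`: a mono matching `f : L → D` with convex image, and a boundary
(pushout) complement `C` such that pasting `R` back along `i+j` yields `E`,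
with all interfaces preserved. -/
def ConvexStep {S : MonSig} {i j n m : Type} (Lr Rr : LCospan S i j)
    (D E : LCospan S n m) : Prop :=
  ∃ (f : LHom Lr.G D.G) (C : LHyp S) (c : i ⊕ j → C.V) (q : n ⊕ m → C.V)
    (g : LHom C D.G) (r : LHom Rr.G E.G) (h : LHom C E.G),
    Function.Injective f.nodeMap ∧ Function.Injective f.edgeMap ∧
    f.toHypHom.image.Convex ∧
    IsPushout (discreteHom Lr.G (Sum.elim Lr.inp Lr.out)) (discreteHom C c) f g ∧
    IsPushout (discreteHom Rr.G (Sum.elim Rr.inp Rr.out)) (discreteHom C c) r h ∧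
    (∀ x, g.nodeMap (q (Sum.inl x)) = D.inp x) ∧
    (∀ y, g.nodeMap (q (Sum.inr y)) = D.out y) ∧
    (∀ x, h.nodeMap (q (Sum.inl x)) = E.inp x) ∧
    (∀ y, h.nodeMap (q (Sum.inr y)) = E.out y) ∧
    Function.Injective c ∧
    (LCospan.mk C (Sum.elim (fun y : j => c (Sum.inr y)) (fun x : n => q (Sum.inl x)))
                  (Sum.elim (fun y : m => q (Sum.inr y)) (fun x : i => c (Sum.inl x)))).Monogamous

/-! ### Σ-terms, the SMC congruence, and the interpretation into cospans -/

/-- Terms over a monoidal signature, generated by the operations, identities,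
symmetries, sequential composition and monoidal product. -/
inductive Term (S : MonSig) : ℕ → ℕ → Type where
  | op (o : S.ops) : Term S (S.ar o) (S.coar o)
  | id (n : ℕ) : Term S n n
  | symm (m n : ℕ) : Term S (m + n) (n + m)
  | seq {m n p : ℕ} : Term S m n → Term S n p → Term S m p
  | par {m₁ n₁ m₂ n₂ : ℕ} : Term S m₁ n₁ → Term S m₂ n₂ → Term S (m₁ + m₂) (n₁ + n₂)

/-- Transport of a term along equalities of its (co)arities. -/
def castTerm {S : MonSig} {m m' n n' : ℕ} (h₁ : m = m') (h₂ : n = n')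
    (t : Term S m n) : Term S m' n' := h₁ ▸ h₂ ▸ t

/-- The congruence on terms generated by the laws of symmetric strict monoidal
categories. -/
inductive SMC (S : MonSig) : {m n : ℕ} → Term S m n → Term S m n → Prop where
  | refl {m n} (t : Term S m n) : SMC S t t
  | symm' {m n} {t u : Term S m n} : SMC S t u → SMC S u t
  | trans {m n} {t u v : Term S m n} : SMC S t u → SMC S u v → SMC S t v
  | seq_congr {m n p} {t t' : Term S m n} {u u' : Term S n p} :
      SMC S t t' → SMC S u u' → SMC S (t.seq u) (t'.seq u')
  | par_congr {m₁ n₁ m₂ n₂} {t t' : Term S m₁ n₁} {u u' : Term S m₂ n₂} :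
      SMC S t t' → SMC S u u' → SMC S (t.par u) (t'.par u')
  | seq_assoc {m n p q} (t : Term S m n) (u : Term S n p) (v : Term S p q) :
      SMC S ((t.seq u).seq v) (t.seq (u.seq v))
  | id_seq {m n} (t : Term S m n) : SMC S ((Term.id m).seq t) t
  | seq_id {m n} (t : Term S m n) : SMC S (t.seq (Term.id n)) t
  | par_assoc {m₁ n₁ m₂ n₂ m₃ n₃} (t : Term S m₁ n₁) (u : Term S m₂ n₂) (v : Term S m₃ n₃) :
      SMC S (castTerm (Nat.add_assoc m₁ m₂ m₃) (Nat.add_assoc n₁ n₂ n₃) ((t.par u).par v))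
            (t.par (u.par v))
  | id_zero_par {m n} (t : Term S m n) :
      SMC S (castTerm (Nat.zero_add m) (Nat.zero_add n) ((Term.id 0).par t)) t
  | par_id_zero {m n} (t : Term S m n) : SMC S (t.par (Term.id 0)) t
  | interchange {m₁ n₁ p₁ m₂ n₂ p₂} (s : Term S m₁ n₁) (u : Term S n₁ p₁)
      (t : Term S m₂ n₂) (v : Term S n₂ p₂) :
      SMC S ((s.seq u).par (t.seq v)) ((s.par t).seq (u.par v))
  | id_par_id (m n : ℕ) : SMC S ((Term.id m).par (Term.id n)) (Term.id (m + n))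
  | symm_symm (m n : ℕ) : SMC S ((Term.symm m n).seq (Term.symm n m)) (Term.id (m + n))
  | symm_hexagon (m n o : ℕ) :
      SMC S ((castTerm rfl (Nat.add_assoc n m o) ((Term.symm m n).par (Term.id o))).seq
              ((Term.id n).par (Term.symm m o)))
            (castTerm (Nat.add_assoc m n o).symm (Nat.add_assoc n o m) (Term.symm m (n + o)))
  | symm_nat {o n : ℕ} (s : Term S o n) (m : ℕ) :
      SMC S ((s.par (Term.id m)).seq (Term.symm n m)) ((Term.symm o m).seq ((Term.id m).par s))

/-- The cospan interpreting a generator `o : k → l`: the carrier has `k + l`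
nodes and a single `o`-labelled hyperedge whose ordered sources are the interface
inputs and whose ordered targets are the interface outputs. -/
def genCospan {S : MonSig} (o : S.ops) : LCospan S (Fin (S.ar o)) (Fin (S.coar o)) where
  G := { V := Fin (S.ar o) ⊕ Fin (S.coar o)
         E := Unit
         src := fun _ => (List.finRange (S.ar o)).map Sum.inl
         tgt := fun _ => (List.finRange (S.coar o)).map Sum.inr
         label := fun _ => o
         src_len := by intro e; simp
         tgt_len := by intro e; simp }
  inp := Sum.inl
  out := Sum.inr

/-- The cospan interpreting `id_k`: discrete carrier with identity legs. -/
def idLCospan (S : MonSig) (k : ℕ) : LCospan S (Fin k) (Fin k) :=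
  ⟨discreteLHyp S (Fin k), id, id⟩

/-- The cospan interpreting the symmetry `σ_{m,n}`: discrete carrier on `m + n`
nodes, identity input leg, and the swap permutation as output leg. -/
def symmLCospan (S : MonSig) (m n : ℕ) : LCospan S (Fin (m + n)) (Fin (n + m)) :=
  ⟨discreteLHyp S (Fin (m + n)), id, fun x => finAddFlip x⟩

/-- The interpretation of terms as cospans of labelled hypergraphs with discrete
interfaces. -/
def interp {S : MonSig} : {m n : ℕ} → Term S m n → LCospan S (Fin m) (Fin n)
  | _, _, .op o => genCospan o
  | _, _, .id k => idLCospan S k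
  | _, _, .symm m n => symmLCospan S m n
  | _, _, .seq t u => (interp t).comp (interp u)
  | _, _, .par t u =>
      ((interp t).tensor (interp u)).reind (finSumFinEquiv.symm) (finSumFinEquiv.symm)

/-- A rewriting system on `Σ`-terms: a set of pairs of terms with equal arities
and coarities. -/
abbrev TermRules (S : MonSig) := Set (Σ i j : ℕ, Term S i j × Term S i j)

/-- Syntactic rewriting modulo the SMC laws: `d ⇒_R e` iff, modulo the SMC
congruence, `d = c₁ ; (id_k ⊕ l) ; c₂` and `e = c₁ ; (id_k ⊕ r) ; c₂` for some
rule `(l, r)` in `R`. -/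
def SynStep {S : MonSig} (R : TermRules S) {n m : ℕ} (d e : Term S n m) : Prop :=
  ∃ (i j : ℕ) (l r : Term S i j), (⟨i, j, (l, r)⟩ ∈ R) ∧
    ∃ (k : ℕ) (c₁ : Term S n (k + i)) (c₂ : Term S (k + j) m),
      SMC S d (c₁.seq (((Term.id k).par l).seq c₂)) ∧
      SMC S e (c₁.seq (((Term.id k).par r).seq c₂))

/-!
Terms modulo the laws of symmetric strict monoidal categories are read as instructions that run in
a hypergraph: starting from a list of nodes, an operation consumes the sources of a hyperedge with
its label and produces the targets. If every node is produced at most once, then the morphism of a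
run is determined by its endpoints and the hyperedges it uses (`Runs.unique`), so that running two
terms in the same hypergraph is a way to prove them equal.

A syntactic step gives a convex one with the context `c₁`, `c₂` as boundary complement. Conversely,
in a boundary complement no path leads from the outputs of the hole back to its inputs, because the
match is convex. Hence the hyperedges reachable from the outputs and the others can be run
separately, the former after and the latter before the hole. This yields `c₂` and `c₁`.
-/

section

variable {S : MonSig}

/-- Equality modulo the laws of symmetric strict monoidal categories, as a relation on the terms of
all types. -/
inductive Term.Equiv : (Σ m n : ℕ, Term S m n) → (Σ m n : ℕ, Term S m n) → Prop
  | of_smc {m n : ℕ} {t u : Term S m n} (h : SMC S t u) : Term.Equiv ⟨m, n, t⟩ ⟨m, n, u⟩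

/-- The setoid of terms of all types. -/
def Term.setoid (S : MonSig) : Setoid (Σ m n : ℕ, Term S m n) where
  r := Term.Equiv
  iseqv :=
    { refl := fun _ => ⟨.refl _⟩
      symm := fun ⟨h⟩ => ⟨h.symm'⟩
      trans := by
        rintro _ _ _ ⟨h⟩ ⟨h'⟩
        exact ⟨h.trans h'⟩ }

/-- Morphisms of the free symmetric strict monoidal category on `S`. Domain and codomain are data
rather than type indices, so that associativity and unitality of `⊕` hold without casts. -/
def Mor (S : MonSig) : Type := Quotient (Term.setoid S)

namespace Mor

/-- The class of a term. -/
def mk {m n : ℕ} (t : Term S m n) : Mor S := Quotient.mk (Term.setoid S) ⟨m, n, t⟩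

theorem mk_eq_mk {m n : ℕ} {t u : Term S m n} : mk t = mk u ↔ SMC S t u := by
  refine ⟨fun h => ?_, fun h => Quotient.sound ⟨h⟩⟩
  obtain ⟨h⟩ : Term.Equiv ⟨m, n, t⟩ ⟨m, n, u⟩ := Quotient.exact h
  exact h

theorem mk_castTerm {m n m' n' : ℕ} (h₁ : m = m') (h₂ : n = n') (t : Term S m n) :
    mk (castTerm h₁ h₂ t) = mk t := by
  subst h₁ h₂
  rfl

theorem exists_rep (x : Mor S) : ∃ (m n : ℕ) (t : Term S m n), x = mk t := by
  obtain ⟨⟨m, n, t⟩, rfl⟩ := Quotient.exists_rep x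
  exact ⟨m, n, t, rfl⟩

/-- The arity of a morphism. -/
def dom (x : Mor S) : ℕ := Quotient.lift (fun a => a.1) (by rintro _ _ ⟨_⟩; rfl) x

/-- The coarity of a morphism. -/
def cod (x : Mor S) : ℕ := Quotient.lift (fun a => a.2.1) (by rintro _ _ ⟨_⟩; rfl) x

theorem exists_rep_of_cod_eq_dom {x y : Mor S} (h : x.cod = y.dom) :
    ∃ (m n p : ℕ) (t : Term S m n) (u : Term S n p), x = mk t ∧ y = mk u := by
  obtain ⟨m, n, t, rfl⟩ := exists_rep x
  obtain ⟨n', p, u, rfl⟩ := exists_rep y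
  obtain rfl : n = n' := h
  exact ⟨m, n, p, t, u, rfl, rfl⟩

/-- The identity on `n` wires. -/
def iden (S : MonSig) (n : ℕ) : Mor S := mk (.id n)

/-- The symmetry `σ_{m,n}`. -/
def swap (S : MonSig) (m n : ℕ) : Mor S := mk (.symm m n)

/-- The morphism given by an operation. -/
def op (o : S.ops) : Mor S := mk (.op o)

/-- The monoidal product `x ⊕ y`, written `x * y`. -/
def par (x y : Mor S) : Mor S :=
  Quotient.lift₂ (fun a b => mk (a.2.2.par b.2.2)) (by
    rintro _ _ _ _ ⟨h⟩ ⟨h'⟩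
    exact mk_eq_mk.2 (SMC.par_congr h h')) x y

instance : Mul (Mor S) := ⟨par⟩

theorem mk_mul_mk {m₁ n₁ m₂ n₂ : ℕ} (t : Term S m₁ n₁) (u : Term S m₂ n₂) :
    mk t * mk u = mk (t.par u) := rfl

instance : Monoid (Mor S) where
  mul_assoc x y z := by
    obtain ⟨_, _, t, rfl⟩ := exists_rep x
    obtain ⟨_, _, u, rfl⟩ := exists_rep y
    obtain ⟨_, _, v, rfl⟩ := exists_rep z
    simp only [mk_mul_mk]
    rw [← mk_eq_mk.2 (SMC.par_assoc t u v), mk_castTerm]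
  one := iden S 0
  one_mul x := by
    obtain ⟨_, _, t, rfl⟩ := exists_rep x
    exact (mk_castTerm (Nat.zero_add _) (Nat.zero_add _) _).symm.trans
      (mk_eq_mk.2 (SMC.id_zero_par t))
  mul_one x := by
    obtain ⟨_, _, t, rfl⟩ := exists_rep x
    exact mk_eq_mk.2 (SMC.par_id_zero t)

/-- Sequential composition, in diagrammatic order. Its value on morphisms that are not composable
is the first one, so that `dom_seq` holds unconditionally. -/
def seq (x y : Mor S) : Mor S :=
  Quotient.lift₂ (fun a b =>
    if h : a.2.1 = b.1 then mk ((castTerm rfl h a.2.2).seq b.2.2) else mk a.2.2) (by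
    rintro ⟨m₁, n₁, _⟩ ⟨m₂, n₂, _⟩ _ _ ⟨h⟩ ⟨h'⟩
    dsimp only
    split_ifs with hc
    · subst hc
      exact mk_eq_mk.2 (SMC.seq_congr h h')
    · exact mk_eq_mk.2 h) x y

end Mor

notation:65 x:66 " ⨟ " y:65 => Mor.seq x y

namespace Mor

theorem mk_seq_mk {m n p : ℕ} (t : Term S m n) (u : Term S n p) : mk t ⨟ mk u = mk (t.seq u) :=
  dif_pos rfl

@[simp, grind =] theorem dom_mk {m n : ℕ} (t : Term S m n) : dom (mk t) = m := rfl
@[simp, grind =] theorem cod_mk {m n : ℕ} (t : Term S m n) : cod (mk t) = n := rfl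
@[simp, grind =] theorem dom_iden (n : ℕ) : (iden S n).dom = n := rfl
@[simp, grind =] theorem cod_iden (n : ℕ) : (iden S n).cod = n := rfl
@[simp, grind =] theorem dom_swap (m n : ℕ) : (swap S m n).dom = m + n := rfl
@[simp, grind =] theorem cod_swap (m n : ℕ) : (swap S m n).cod = n + m := rfl
@[simp, grind =] theorem dom_op (o : S.ops) : (op o).dom = S.ar o := rfl
@[simp, grind =] theorem cod_op (o : S.ops) : (op o).cod = S.coar o := rfl
@[simp] theorem iden_zero : iden S 0 = 1 := rfl

@[simp, grind =] theorem dom_mul (x y : Mor S) : (x * y).dom = x.dom + y.dom := by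
  obtain ⟨_, _, t, rfl⟩ := exists_rep x
  obtain ⟨_, _, u, rfl⟩ := exists_rep y
  rfl

@[simp, grind =] theorem cod_mul (x y : Mor S) : (x * y).cod = x.cod + y.cod := by
  obtain ⟨_, _, t, rfl⟩ := exists_rep x
  obtain ⟨_, _, u, rfl⟩ := exists_rep y
  rfl

@[simp, grind =] theorem dom_seq (x y : Mor S) : (x ⨟ y).dom = x.dom := by
  obtain ⟨m, n, t, rfl⟩ := exists_rep x
  obtain ⟨n', p, u, rfl⟩ := exists_rep y
  change dom (if h : n = n' then mk ((castTerm rfl h t).seq u) else mk t) = m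
  split_ifs <;> rfl

@[simp, grind =] theorem cod_seq {x y : Mor S} (h : x.cod = y.dom) : (x ⨟ y).cod = y.cod := by
  obtain ⟨_, _, _, t, u, rfl, rfl⟩ := exists_rep_of_cod_eq_dom h
  rw [mk_seq_mk]
  rfl

theorem seq_assoc {x y z : Mor S} (h : x.cod = y.dom) (h' : y.cod = z.dom) :
    (x ⨟ y) ⨟ z = x ⨟ y ⨟ z := by
  obtain ⟨_, _, p, t, u, rfl, rfl⟩ := exists_rep_of_cod_eq_dom h
  obtain ⟨p', _, v, rfl⟩ := exists_rep z
  obtain rfl : p = p' := h'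
  simp only [mk_seq_mk]
  exact mk_eq_mk.2 (SMC.seq_assoc t u v)

theorem iden_seq {n : ℕ} {x : Mor S} (h : x.dom = n) : iden S n ⨟ x = x := by
  obtain ⟨m, _, t, rfl⟩ := exists_rep x
  obtain rfl : m = n := h
  rw [iden, mk_seq_mk]
  exact mk_eq_mk.2 (SMC.id_seq t)

theorem seq_iden {n : ℕ} {x : Mor S} (h : x.cod = n) : x ⨟ iden S n = x := by
  obtain ⟨_, m, t, rfl⟩ := exists_rep x
  obtain rfl : m = n := h
  rw [iden, mk_seq_mk]
  exact mk_eq_mk.2 (SMC.seq_id t)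

theorem seq_mul_seq {s u t v : Mor S} (h : s.cod = u.dom) (h' : t.cod = v.dom) :
    (s ⨟ u) * (t ⨟ v) = s * t ⨟ u * v := by
  obtain ⟨_, _, _, s, u, rfl, rfl⟩ := exists_rep_of_cod_eq_dom h
  obtain ⟨_, _, _, t, v, rfl, rfl⟩ := exists_rep_of_cod_eq_dom h'
  simp only [mk_seq_mk, mk_mul_mk]
  exact mk_eq_mk.2 (SMC.interchange s u t v)

theorem iden_mul_iden (m n : ℕ) : iden S m * iden S n = iden S (m + n) :=
  mk_eq_mk.2 (SMC.id_par_id m n)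

theorem swap_seq_swap (m n : ℕ) : swap S m n ⨟ swap S n m = iden S (m + n) := by
  simp only [swap, mk_seq_mk]
  exact mk_eq_mk.2 (SMC.symm_symm m n)

theorem swap_add_right (m n o : ℕ) :
    swap S m (n + o) = swap S m n * iden S o ⨟ iden S n * swap S m o := by
  have h := mk_eq_mk.2 (SMC.symm_hexagon (S := S) m n o)
  rw [mk_castTerm, ← mk_seq_mk, mk_castTerm] at h
  exact h.symm

theorem mul_iden_seq_swap {x : Mor S} {k l : ℕ} (hk : x.dom = k) (hl : x.cod = l) (m : ℕ) :
    x * iden S m ⨟ swap S l m = swap S k m ⨟ iden S m * x := by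
  subst hk hl
  obtain ⟨_, _, t, rfl⟩ := exists_rep x
  simp only [iden, swap, mk_mul_mk, cod_mk, dom_mk, mk_seq_mk]
  exact mk_eq_mk.2 (SMC.symm_nat t m)

theorem iden_mul_seq {x y : Mor S} (h : x.cod = y.dom) (n : ℕ) :
    iden S n * (x ⨟ y) = iden S n * x ⨟ iden S n * y := by
  rw [← seq_mul_seq (by simp) h, iden_seq (by simp)]

theorem seq_mul_iden {x y : Mor S} (h : x.cod = y.dom) (n : ℕ) :
    (x ⨟ y) * iden S n = x * iden S n ⨟ y * iden S n := by
  rw [← seq_mul_seq h (by simp), iden_seq (by simp)]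

theorem mul_eq_mul_iden_seq {x y : Mor S} {m n : ℕ} (hm : x.cod = m) (hn : y.dom = n) :
    x * y = x * iden S n ⨟ iden S m * y := by
  rw [← seq_mul_seq (by simp [hm]) (by simp [hn]), seq_iden hm, iden_seq hn]

theorem mul_eq_iden_mul_seq {x y : Mor S} {m n : ℕ} (hm : x.dom = m) (hn : y.cod = n) :
    x * y = iden S m * y ⨟ x * iden S n := by
  rw [← seq_mul_seq (by simp [hm]) (by simp [hn]), iden_seq hm, seq_iden hn]

theorem eq_of_inverse {x y z : Mor S} {m n : ℕ} (h : x ⨟ z = iden S m) (h' : z ⨟ y = iden S n)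
    (hx : x.cod = z.dom) (hz : z.cod = y.dom) : x = y := by
  have hn : n = z.dom := by simpa using congrArg dom h'.symm
  have hm : m = z.cod := by simpa [hx] using congrArg cod h.symm
  rw [← seq_iden (hx.trans hn.symm), ← h', ← seq_assoc hx hz, h, iden_seq (by omega)]

theorem swap_zero_right (m : ℕ) : swap S m 0 = iden S m := by
  have hexagon : swap S m 0 = swap S m 0 ⨟ swap S m 0 := by
    simpa using swap_add_right (S := S) m 0 0
  have hinv : swap S m 0 ⨟ swap S 0 m = iden S m := by simpa using swap_seq_swap (S := S) m 0
  rw [← hinv]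
  nth_rw 2 [hexagon]
  rw [seq_assoc (by simp) (by simp), hinv, seq_iden (by simp)]

theorem swap_add_left (m n o : ℕ) :
    swap S (m + n) o = iden S m * swap S n o ⨟ swap S m o * iden S n := by
  have hinv : swap S o (m + n) ⨟ iden S m * swap S n o ⨟ swap S m o * iden S n =
      iden S (o + (m + n)) := by
    rw [swap_add_right, seq_assoc, ← seq_assoc (x := iden S m * _), ← iden_mul_seq, swap_seq_swap,
      iden_mul_iden, iden_seq, ← seq_mul_iden, swap_seq_swap, iden_mul_iden, add_assoc] <;> grind
  exact eq_of_inverse (swap_seq_swap _ _) hinv (by grind) (by grind)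

theorem swap_seq_mul_iden {x : Mor S} {k l : ℕ} (hk : x.dom = k) (hl : x.cod = l) (m : ℕ) :
    swap S m k ⨟ x * iden S m = iden S m * x ⨟ swap S m l := by
  calc swap S m k ⨟ x * iden S m
    _ = swap S m k ⨟ (x * iden S m ⨟ swap S l m) ⨟ swap S m l := by
      rw [seq_assoc, swap_seq_swap, seq_iden] <;> grind
    _ = iden S m * x ⨟ swap S m l := by
      rw [mul_iden_seq_swap hk hl, ← seq_assoc, ← seq_assoc, swap_seq_swap, iden_seq] <;> grind

/-- The morphism moving the first of `1 + a + b` wires past the next `a` wires. -/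
def moveFirst (S : MonSig) (a b : ℕ) : Mor S := swap S 1 a * iden S b

@[simp, grind =] theorem dom_moveFirst (a b : ℕ) : (moveFirst S a b).dom = 1 + a + b := rfl
@[simp, grind =] theorem cod_moveFirst (a b : ℕ) : (moveFirst S a b).cod = a + 1 + b := rfl

theorem moveFirst_zero (b : ℕ) : moveFirst S 0 b = iden S (1 + b) := by
  rw [moveFirst, swap_zero_right, iden_mul_iden]

theorem moveFirst_mul_iden (a b c : ℕ) : moveFirst S a b * iden S c = moveFirst S a (b + c) := by
  rw [moveFirst, mul_assoc, iden_mul_iden, moveFirst]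

theorem moveFirst_add (a b c : ℕ) :
    moveFirst S (a + b) c = moveFirst S a (b + c) ⨟ iden S a * moveFirst S b c := by
  simp only [moveFirst]
  rw [swap_add_right, seq_mul_iden (by grind), mul_assoc, iden_mul_iden, mul_assoc]

theorem moveFirst_seq_mul {x y : Mor S} {a b m : ℕ} (hx : x.dom = a) (hx' : x.cod = b)
    (hy : y.cod = m) :
    moveFirst S a y.dom ⨟ x * (iden S 1 * y) = iden S 1 * (x * y) ⨟ moveFirst S b m := by
  simp only [moveFirst, ← mul_assoc]
  rw [← seq_mul_seq, swap_seq_mul_iden hx hx', iden_seq, ← seq_mul_seq, seq_iden] <;> grind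

theorem moveFirst_seq_swap_left (a b c : ℕ) :
    moveFirst S a (b + c) ⨟ swap S (a + 1 + b) c =
      iden S 1 * swap S (a + b) c ⨟ moveFirst S (c + a) b := by
  rw [← moveFirst_mul_iden, mul_iden_seq_swap (k := 1 + (a + b)), swap_add_left, moveFirst_add,
    seq_assoc] <;> grind [moveFirst]

theorem moveFirst_seq_swap_right (a b c : ℕ) :
    moveFirst S (a + b) c ⨟ swap S a (b + 1 + c) =
      iden S 1 * swap S a (b + c) ⨟ moveFirst S b (c + a) := by
  have h : iden S 1 * swap S a (b + c) = moveFirst S a (b + c) ⨟ swap S a (1 + (b + c)) := by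
    rw [swap_add_right a 1 (b + c), ← seq_assoc, moveFirst, ← seq_mul_iden, swap_seq_swap,
      iden_mul_iden, iden_seq] <;> grind
  rw [h, ← moveFirst_mul_iden b c a, seq_assoc, swap_seq_mul_iden (l := b + 1 + c), moveFirst_add,
    seq_assoc] <;> grind

/-- `f` before `g` becomes `g` before `f`: the wiring between them sends no output of `f` to `g`. -/
theorem layer_exchange {f g p q : Mor S} {a b c d n s m : ℕ} (fd : f.dom = a) (fc : f.cod = b)
    (gd : g.dom = c) (gc : g.cod = d) (pd : p.dom = n) (pc : p.cod = c + s)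
    (qd : q.dom = b + s) (qc : q.cod = m) :
    f * iden S n ⨟ (iden S b * p ⨟ swap S b c * iden S s ⨟ iden S c * q) ⨟ g * iden S m =
      (iden S a * p ⨟ swap S a c * iden S s) ⨟ g * iden S (a + s) ⨟
        iden S d * (f * iden S s) ⨟ iden S d * q := by
  have slide_q : iden S c * q ⨟ g * iden S m = g * iden S (b + s) ⨟ iden S d * q := by
    rw [← mul_eq_mul_iden_seq gc qd, ← mul_eq_iden_mul_seq gd qc]
  have slide_p : f * iden S n ⨟ iden S b * p = iden S a * p ⨟ f * iden S (c + s) := by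
    rw [← mul_eq_mul_iden_seq fc pd, ← mul_eq_iden_mul_seq fd pc]
  have slide_swap : f * iden S (c + s) ⨟ swap S b c * iden S s =
      swap S a c * iden S s ⨟ iden S c * (f * iden S s) := by
    rw [← iden_mul_iden, ← mul_assoc, ← seq_mul_iden, mul_iden_seq_swap fd fc, seq_mul_iden,
      mul_assoc] <;> grind
  have slide_g : iden S c * (f * iden S s) ⨟ g * iden S (b + s) =
      g * iden S (a + s) ⨟ iden S d * (f * iden S s) := by
    rw [← mul_eq_iden_mul_seq (x := g) gd, ← mul_eq_mul_iden_seq gc] <;> grind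
  calc f * iden S n ⨟ (iden S b * p ⨟ swap S b c * iden S s ⨟ iden S c * q) ⨟ g * iden S m
    _ = (f * iden S n ⨟ iden S b * p) ⨟ swap S b c * iden S s ⨟
          iden S c * q ⨟ g * iden S m := by
      simp (disch := grind) only [seq_assoc]
    _ = iden S a * p ⨟ (f * iden S (c + s) ⨟ swap S b c * iden S s) ⨟
          g * iden S (b + s) ⨟ iden S d * q := by
      rw [slide_p, slide_q]; simp (disch := grind) only [seq_assoc]
    _ = iden S a * p ⨟ swap S a c * iden S s ⨟
          (iden S c * (f * iden S s) ⨟ g * iden S (b + s)) ⨟ iden S d * q := by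
      rw [slide_swap]; simp (disch := grind) only [seq_assoc]
    _ = _ := by
      rw [slide_g]; simp (disch := grind) only [seq_assoc]

end Mor

end

section

open Mor

variable {S : MonSig}

namespace LHyp

variable {G : LHyp S}

attribute [grind =] LHyp.src_len LHyp.tgt_len

/-- The sources of the hyperedges in `A`, with multiplicity. -/
def srcs (G : LHyp S) (A : Multiset G.E) : Multiset G.V := A.bind fun e => G.src e

/-- The targets of the hyperedges in `A`, with multiplicity. -/
def tgts (G : LHyp S) (A : Multiset G.E) : Multiset G.V := A.bind fun e => G.tgt e

theorem mem_srcs {A : Multiset G.E} {v : G.V} : v ∈ G.srcs A ↔ ∃ e ∈ A, v ∈ G.src e := by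
  simp [srcs]

theorem mem_tgts {A : Multiset G.E} {v : G.V} : v ∈ G.tgts A ↔ ∃ e ∈ A, v ∈ G.tgt e := by
  simp [tgts]

@[simp] theorem srcs_zero : G.srcs 0 = 0 := Multiset.zero_bind _
@[simp] theorem tgts_zero : G.tgts 0 = 0 := Multiset.zero_bind _
@[simp] theorem srcs_singleton (e : G.E) : G.srcs {e} = G.src e := Multiset.singleton_bind _ _
@[simp] theorem tgts_singleton (e : G.E) : G.tgts {e} = G.tgt e := Multiset.singleton_bind _ _
@[simp] theorem srcs_add (A B : Multiset G.E) : G.srcs (A + B) = G.srcs A + G.srcs B :=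
  Multiset.add_bind ..
@[simp] theorem tgts_add (A B : Multiset G.E) : G.tgts (A + B) = G.tgts A + G.tgts B :=
  Multiset.add_bind ..
@[simp] theorem tgts_cons (e : G.E) (A : Multiset G.E) : G.tgts (e ::ₘ A) = G.tgt e + G.tgts A :=
  Multiset.cons_bind ..

/-- No node occurs twice among the wires `w` and the targets of the hyperedges in `A`, so that every
node arises at most once while the hyperedges in `A` are used in turn, starting from `w`. -/
def ProducedOnce (G : LHyp S) (w : List G.V) (A : Multiset G.E) : Prop :=
  ((w : Multiset G.V) + G.tgts A).Nodup

namespace ProducedOnce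

variable {w w' r : List G.V} {e : G.E} {A : Multiset G.E}

theorem nodup (h : G.ProducedOnce w A) : w.Nodup := (Multiset.nodup_add.1 h).1

theorem perm (h : G.ProducedOnce w A) (hw : w.Perm w') : G.ProducedOnce w' A := by
  rwa [ProducedOnce, ← Multiset.coe_eq_coe.2 hw]

theorem notMem_tgt (h : G.ProducedOnce w A) {v : G.V} (hv : v ∈ w) (he : e ∈ A) : v ∉ G.tgt e :=
  fun hve => Multiset.disjoint_left.1 (Multiset.nodup_add.1 h).2.2 (Multiset.mem_coe.2 hv)
    (mem_tgts.2 ⟨e, he, hve⟩)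

theorem tail (h : G.ProducedOnce (G.src e ++ r) (e ::ₘ A)) : G.ProducedOnce (G.tgt e ++ r) A := by
  refine Multiset.nodup_of_le ?_ h
  calc ((G.tgt e ++ r : List G.V) : Multiset G.V) + G.tgts A
    _ ≤ G.src e + ((G.tgt e ++ r : List G.V) + G.tgts A) := Multiset.le_add_left _ _
    _ = (G.src e ++ r : List G.V) + G.tgts (e ::ₘ A) := by
      simp only [← Multiset.coe_add, tgts_cons]
      abel

end ProducedOnce

/-- The morphism using the hyperedge `e` next to the wires `r`. -/
def layer (G : LHyp S) (e : G.E) (r : List G.V) : Mor S := op (G.label e) * iden S r.length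

@[simp, grind =] theorem dom_layer (e : G.E) (r : List G.V) :
    (G.layer e r).dom = (G.src e).length + r.length := by
  simp [layer, G.src_len]

@[simp, grind =] theorem cod_layer (e : G.E) (r : List G.V) :
    (G.layer e r).cod = (G.tgt e).length + r.length := by
  simp [layer, G.tgt_len]

end LHyp

/-- A labelled hypergraph `G` lets morphisms act on lists of nodes: `Runs G w x A w'` says that `x`
can turn `w` into `w'` by replacing, for every hyperedge in `A`, its sources with its targets. -/
inductive Runs (G : LHyp S) : List G.V → Mor S → Multiset G.E → List G.V → Prop
  | op (e : G.E) : Runs G (G.src e) (op (G.label e)) {e} (G.tgt e)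
  | id (w : List G.V) : Runs G w (iden S w.length) 0 w
  | swap (a b : List G.V) : Runs G (a ++ b) (swap S a.length b.length) 0 (b ++ a)
  | seq {w x A v y B w'} : Runs G w x A v → Runs G v y B w' → Runs G w (x ⨟ y) (A + B) w'
  | par {w x A w' v y B v'} : Runs G w x A w' → Runs G v y B v' →
      Runs G (w ++ v) (x * y) (A + B) (w' ++ v')

theorem exists_eq_append_of_append_eq_append_cons {α : Type*} {w₁ w₂ a b : List α} {v : α}
    (h : w₁ ++ w₂ = a ++ v :: b) :
    (∃ c, w₁ = a ++ v :: c ∧ b = c ++ w₂) ∨ ∃ c, a = w₁ ++ c ∧ w₂ = c ++ v :: b := by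
  rcases List.append_eq_append_iff.1 h with ⟨c, h₁, h₂⟩ | ⟨c, h₁, h₂⟩
  · exact .inr ⟨c, h₁, h₂⟩
  · rcases List.cons_eq_append_iff.1 h₂ with ⟨rfl, rfl⟩ | ⟨d, rfl, rfl⟩
    · exact .inr ⟨[], by simpa using h₁.symm, rfl⟩
    · exact .inl ⟨d, h₁, rfl⟩

theorem exists_perm_append {α : Type*} {s r t r' : List α} (h : (t ++ r).Perm (s ++ r'))
    (hst : ∀ v ∈ s, v ∉ t) (hs : s.Nodup) : ∃ u, r.Perm (s ++ u) ∧ (t ++ u).Perm r' := by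
  have hsub : s.Subperm r := hs.subperm fun v hv =>
    (List.mem_append.1 (h.symm.subset (List.mem_append_left _ hv))).resolve_left (hst v hv)
  obtain ⟨s', hs', hsl⟩ := hsub
  obtain ⟨u, hu⟩ := hsl.exists_perm_append
  have hru : r.Perm (s ++ u) := hu.trans (hs'.append_right u)
  have htu : (s ++ (t ++ u)).Perm (t ++ (s ++ u)) := List.perm_append_comm_assoc s t u
  exact ⟨u, hru, (List.perm_append_left_iff s).1 (htu.trans ((hru.symm.append_left t).trans h))⟩

namespace Runs

variable {G : LHyp S} {w w' v a b : List G.V} {A B : Multiset G.E} {x y z : Mor S}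

theorem dom_and_cod (h : Runs G w x A w') : x.dom = w.length ∧ x.cod = w'.length := by
  induction h with
  | op e => simp [G.src_len, G.tgt_len]
  | id w => simp
  | swap a b => simp
  | seq _ _ ih ih' => simp [ih, ih']
  | par _ _ ih ih' => simp [ih, ih']

@[grind →] theorem dom (h : Runs G w x A w') : x.dom = w.length := h.dom_and_cod.1
@[grind →] theorem cod (h : Runs G w x A w') : x.cod = w'.length := h.dom_and_cod.2

theorem layer (e : G.E) (r : List G.V) :
    Runs G (G.src e ++ r) (G.layer e r) {e} (G.tgt e ++ r) := by
  simpa [LHyp.layer] using (Runs.op e).par (.id r)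

theorem layer_seq_iden_mul {r r' : List G.V} (e : G.E) (hz : Runs G r z A r') :
    G.layer e r ⨟ iden S (G.tgt e).length * z = iden S (G.src e).length * z ⨟ G.layer e r' := by
  rw [LHyp.layer, ← mul_eq_mul_iden_seq (by grind) hz.dom, LHyp.layer,
    ← mul_eq_iden_mul_seq (by grind) hz.cod]

theorem add_tgts (h : Runs G w x A w') : (w : Multiset G.V) + G.tgts A = G.srcs A + w' := by
  induction h with
  | op e => simp
  | id w => simp
  | swap a b => simp [← Multiset.coe_add, add_comm]
  | seq _ _ ih ih' => rw [LHyp.tgts_add, LHyp.srcs_add, ← add_assoc, ih, add_assoc, ih', add_assoc]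
  | par _ _ ih ih' =>
    rw [LHyp.tgts_add, LHyp.srcs_add, ← Multiset.coe_add, ← Multiset.coe_add, add_add_add_comm, ih,
      ih', add_add_add_comm]

theorem perm (h : Runs G w x 0 w') : w.Perm w' := by
  simpa using h.add_tgts

theorem seq_zero (hx : Runs G w x A v) (hy : Runs G v y 0 w') : Runs G w (x ⨟ y) A w' := by
  simpa using hx.seq hy

theorem zero_seq (hx : Runs G w x 0 v) (hy : Runs G v y B w') : Runs G w (x ⨟ y) B w' := by
  simpa using hx.seq hy

theorem par_id (hx : Runs G w x A w') (v : List G.V) :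
    Runs G (w ++ v) (x * iden S v.length) A (w' ++ v) := by
  simpa using hx.par (.id v)

theorem id_par (hx : Runs G w x A w') (v : List G.V) :
    Runs G (v ++ w) (iden S v.length * x) A (v ++ w') := by
  simpa using (Runs.id v).par hx

theorem exists_of_perm (h : w.Perm w') : ∃ x, Runs G w x 0 w' := by
  induction h with
  | nil => exact ⟨_, .id _⟩
  | cons v _ ih =>
    obtain ⟨x, hx⟩ := ih
    exact ⟨_, hx.id_par [v]⟩
  | swap a b l => exact ⟨_, (Runs.swap [b] [a]).par_id l⟩
  | trans _ _ ih ih' =>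
    obtain ⟨x, hx⟩ := ih
    obtain ⟨y, hy⟩ := ih'
    exact ⟨_, hx.seq_zero hy⟩

/-- The wire `u`, between the wires `a` and `b`, slides through `x`: moving it into place and then
applying `x` is the same as applying some `x'` to the other wires and then moving `u` into place. -/
def Slides (G : LHyp S) (a : List G.V) (u : G.V) (b : List G.V) (x : Mor S) (w' : List G.V) :
    Prop :=
  ∃ a' b' x', w' = a' ++ u :: b' ∧ Runs G (a ++ b) x' 0 (a' ++ b') ∧
    moveFirst S a.length b.length ⨟ x = iden S 1 * x' ⨟ moveFirst S a'.length b'.length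

namespace Slides

variable {u : G.V} {w₁ w₂ w₁' w₂' : List G.V}

protected theorem id : Slides G a u b (iden S (a ++ u :: b).length) (a ++ u :: b) := by
  refine ⟨a, b, _, rfl, .id _, ?_⟩
  rw [seq_iden, iden_mul_iden, iden_seq] <;> grind

theorem swap_left (a b w₂ : List G.V) (u : G.V) :
    Slides G a u (b ++ w₂) (Mor.swap S (a ++ u :: b).length w₂.length) (w₂ ++ (a ++ u :: b)) := by
  refine ⟨w₂ ++ a, b, _, by simp, by simpa using Runs.swap (a ++ b) w₂, ?_⟩
  have h := moveFirst_seq_swap_left (S := S) a.length b.length w₂.length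
  simpa [add_assoc, add_comm, add_left_comm] using h

theorem swap_right (a b w₁ : List G.V) (u : G.V) :
    Slides G (w₁ ++ a) u b (Mor.swap S w₁.length (a ++ u :: b).length) (a ++ u :: b ++ w₁) := by
  refine ⟨a, b ++ w₁, _, by simp, by simpa using Runs.swap w₁ (a ++ b), ?_⟩
  have h := moveFirst_seq_swap_right (S := S) w₁.length a.length b.length
  simpa [add_assoc, add_comm, add_left_comm] using h

theorem seq (hx : Slides G a u b x w) (hxd : x.dom = (a ++ u :: b).length) (hxc : x.cod = y.dom)
    (hy : ∀ a' b', w = a' ++ u :: b' → Slides G a' u b' y w') : Slides G a u b (x ⨟ y) w' := by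
  obtain ⟨a', b', x', rfl, hx', ex⟩ := hx
  obtain ⟨a'', b'', y', rfl, hy', ey⟩ := hy a' b' rfl
  refine ⟨a'', b'', x' ⨟ y', rfl, hx'.zero_seq hy', ?_⟩
  have hyd : y.dom = a'.length + 1 + b'.length := by
    have := congrArg Mor.cod ex
    rw [cod_seq (by grind), cod_seq (by grind)] at this
    grind
  rw [← Mor.seq_assoc, ex, Mor.seq_assoc, ey, ← Mor.seq_assoc, iden_mul_seq] <;> grind

theorem mul (hx : Slides G a u b x w₁) (hxd : x.dom = (a ++ u :: b).length)
    (hy : Runs G v y 0 w₂) : Slides G a u (b ++ v) (x * y) (w₁ ++ w₂) := by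
  obtain ⟨a', b', x', rfl, hx', ex⟩ := hx
  refine ⟨a', b' ++ w₂, x' * y, by simp, by simpa using hx'.par hy, ?_⟩
  rw [List.length_append, ← moveFirst_mul_iden, ← seq_mul_seq, ex, iden_seq, List.length_append,
    ← moveFirst_mul_iden, ← mul_assoc, ← seq_mul_seq, seq_iden] <;> grind

theorem mul_of_runs (hx : Runs G v x 0 w₁) (hy : Slides G a u b y w₂)
    (hyd : y.dom = (a ++ u :: b).length) : Slides G (v ++ a) u b (x * y) (w₁ ++ w₂) := by
  obtain ⟨a', b', y', rfl, hy', ey⟩ := hy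
  refine ⟨w₁ ++ a', b', x * y', by simp, by simpa using hx.par hy', ?_⟩
  calc moveFirst S (v ++ a).length b.length ⨟ x * y
    _ = moveFirst S v.length y'.dom ⨟ x * (moveFirst S a.length b.length ⨟ y) := by
      rw [List.length_append, moveFirst_add, Mor.seq_assoc, ← seq_mul_seq, iden_seq] <;> grind
    _ = (moveFirst S v.length y'.dom ⨟ x * (iden S 1 * y')) ⨟
          iden S w₁.length * moveFirst S a'.length b'.length := by
      rw [ey, Mor.seq_assoc, ← seq_mul_seq, seq_iden] <;> grind
    _ = iden S 1 * (x * y') ⨟ moveFirst S (w₁ ++ a').length b'.length := by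
      rw [moveFirst_seq_mul hx.dom hx.cod hy'.cod, List.length_append, List.length_append,
        moveFirst_add, Mor.seq_assoc] <;> grind

end Slides

theorem slides (h : Runs G w x A w') (hA : A = 0) (a : List G.V) (u : G.V) (b : List G.V)
    (hw : w = a ++ u :: b) : Slides G a u b x w' := by
  induction h generalizing a b with
  | op e => simp at hA
  | id w =>
    subst hw
    exact .id
  | swap w₁ w₂ =>
    rcases exists_eq_append_of_append_eq_append_cons hw with ⟨c, rfl, rfl⟩ | ⟨c, rfl, rfl⟩
    · exact .swap_left ..
    · exact .swap_right ..
  | seq hx hy ih ih' =>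
    obtain ⟨rfl, rfl⟩ := add_eq_zero.1 hA
    exact (ih rfl a b hw).seq (hw ▸ hx.dom) (hx.cod.trans hy.dom.symm) (ih' rfl)
  | par hx hy ih ih' =>
    obtain ⟨rfl, rfl⟩ := add_eq_zero.1 hA
    rcases exists_eq_append_of_append_eq_append_cons hw with ⟨c, rfl, rfl⟩ | ⟨c, rfl, rfl⟩
    · exact (ih rfl a c rfl).mul hx.dom hy
    · exact .mul_of_runs hx (ih' rfl c b rfl) hy.dom

theorem eq_one_of_eq_nil (h : Runs G w x A w') (hA : A = 0) (hw : w = []) : x = 1 := by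
  induction h with
  | op e => simp at hA
  | id w => simp [hw]
  | swap a b =>
    obtain ⟨rfl, rfl⟩ := List.append_eq_nil_iff.1 hw
    simp [swap_zero_right]
  | seq hx _ ih ih' =>
    obtain ⟨rfl, rfl⟩ := add_eq_zero.1 hA
    subst hw
    rw [ih rfl rfl, ih' rfl (List.nil_perm.1 hx.perm), ← iden_zero, iden_seq (dom_iden 0)]
  | par _ _ ih ih' =>
    obtain ⟨rfl, rfl⟩ := add_eq_zero.1 hA
    obtain ⟨rfl, rfl⟩ := List.append_eq_nil_iff.1 hw
    rw [ih rfl rfl, ih' rfl rfl, one_mul]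

theorem exists_eq_iden_one_mul {u : G.V} (h : Runs G (u :: w) x 0 w') :
    ∃ a b x', w' = a ++ u :: b ∧ Runs G w x' 0 (a ++ b) ∧
      x = iden S 1 * x' ⨟ moveFirst S a.length b.length := by
  obtain ⟨a, b, x', hw', hx', e⟩ := h.slides rfl [] u w rfl
  refine ⟨a, b, x', hw', hx', ?_⟩
  rwa [List.length_nil, moveFirst_zero, iden_seq (by grind)] at e

theorem unique_of_nodup (hw : w.Nodup) (hx : Runs G w x 0 w') (hy : Runs G w y 0 w') : x = y := by
  induction w generalizing x y w' with
  | nil => rw [hx.eq_one_of_eq_nil rfl rfl, hy.eq_one_of_eq_nil rfl rfl]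
  | cons u w ih =>
    obtain ⟨a, b, x', rfl, hx', rfl⟩ := hx.exists_eq_iden_one_mul
    obtain ⟨a', b', y', hsplit, hy', rfl⟩ := hy.exists_eq_iden_one_mul
    have hu : u ∉ a ++ b := fun h => (List.nodup_cons.1 hw).1 (hx'.perm.mem_iff.2 h)
    rw [List.mem_append, not_or] at hu
    obtain ⟨rfl, -, rfl⟩ := (List.append_cons_inj_of_notMem hu.1 hu.2).1 hsplit
    rw [ih (List.nodup_cons.1 hw).2 hx' hy']

theorem exists_layer_exchange {e₁ e : G.E} {r r' : List G.V} {q : Mor S}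
    (hq : Runs G (G.tgt e₁ ++ r) q 0 (G.src e ++ r')) (hn : (G.tgt e₁ ++ r).Nodup)
    (he : ∀ v ∈ G.src e, v ∉ G.tgt e₁) :
    ∃ s p' q', Runs G (G.src e₁ ++ r) p' 0 (G.src e ++ s) ∧ Runs G (G.tgt e ++ s) q' {e₁}
      (G.tgt e ++ r') ∧ G.layer e₁ r ⨟ q ⨟ G.layer e r' = p' ⨟ G.layer e s ⨟ q' := by
  obtain ⟨t, hrt, htr'⟩ := exists_perm_append hq.perm he
    (List.nodup_append.1 (hq.perm.nodup_iff.1 hn)).1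
  obtain ⟨p, hp⟩ := exists_of_perm hrt
  obtain ⟨q₂, hq₂⟩ := exists_of_perm htr'
  have swap_src (w : List G.V) : Runs G (w ++ (G.src e ++ t))
      (Mor.swap S w.length (G.src e).length * iden S t.length) 0 (G.src e ++ (w ++ t)) := by
    simpa using (Runs.swap w (G.src e)).par_id t
  obtain rfl := unique_of_nodup hn hq
    ((hp.id_par _).seq_zero ((swap_src _).seq_zero (hq₂.id_par _)))
  refine ⟨G.src e₁ ++ t, _, _, (hp.id_par _).seq_zero (swap_src _),
    ((Runs.layer e₁ t).id_par (G.tgt e)).seq_zero (by simpa using hq₂.id_par (G.tgt e)), ?_⟩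
  simp only [LHyp.layer, List.length_append]
  exact layer_exchange (G.src_len e₁).symm (G.tgt_len e₁).symm (G.src_len e).symm
    (G.tgt_len e).symm hp.dom (by grind) (by grind) hq₂.cod

end Runs

/-- Runs of morphisms in which the hyperedges are used one after the other. -/
inductive Layered (G : LHyp S) : List G.V → Mor S → Multiset G.E → List G.V → Prop
  | nil {w p w'} : Runs G w p 0 w' → Layered G w p 0 w'
  | cons {w p e r x A w'} : Runs G w p 0 (G.src e ++ r) → Layered G (G.tgt e ++ r) x A w' →
      Layered G w (p ⨟ G.layer e r ⨟ x) (e ::ₘ A) w'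

namespace Layered

variable {G : LHyp S} {w w' v : List G.V} {A B : Multiset G.E} {x y : Mor S}

theorem runs (h : Layered G w x A w') : Runs G w x A w' := by
  induction h with
  | nil h => exact h
  | cons hp _ ih => exact hp.zero_seq ((Runs.layer _ _).seq ih)

@[grind →] theorem dom (h : Layered G w x A w') : x.dom = w.length := h.runs.dom
@[grind →] theorem cod (h : Layered G w x A w') : x.cod = w'.length := h.runs.cod

theorem perm_seq {p : Mor S} (hp : Runs G w p 0 v) (hx : Layered G v x A w') :
    Layered G w (p ⨟ x) A w' := by
  cases hx with
  | nil h => exact .nil (hp.seq_zero h)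
  | cons hq hx =>
    rw [← Mor.seq_assoc (by grind) (by grind)]
    exact .cons (hp.seq_zero hq) hx

theorem trans (hx : Layered G w x A v) (hy : Layered G v y B w') :
    Layered G w (x ⨟ y) (A + B) w' := by
  induction hx with
  | nil h => simpa using perm_seq h hy
  | cons hq hx ih =>
    rw [Multiset.cons_add, Mor.seq_assoc (by grind) (by grind), Mor.seq_assoc (by grind) (by grind)]
    exact .cons hq (ih hy)

theorem mul_iden (hx : Layered G w x A w') (v : List G.V) :
    Layered G (w ++ v) (x * iden S v.length) A (w' ++ v) := by
  induction hx with
  | nil h => exact .nil (h.par_id v)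
  | @cons w q e r x A w' hq hx ih =>
    have hlayer : G.layer e r * iden S v.length = G.layer e (r ++ v) := by
      rw [LHyp.layer, mul_assoc, iden_mul_iden, ← List.length_append, LHyp.layer]
    rw [seq_mul_iden (by grind), seq_mul_iden (by grind), hlayer]
    exact .cons (by simpa using hq.par_id v) (by simpa using ih)

theorem iden_mul (hx : Layered G w x A w') (v : List G.V) :
    Layered G (v ++ w) (iden S v.length * x) A (v ++ w') := by
  have h := (perm_seq (Runs.swap v w) (hx.mul_iden v)).trans (.nil (Runs.swap w' v))
  rwa [swap_seq_mul_iden hx.dom hx.cod, Mor.seq_assoc (by grind) (by grind), swap_seq_swap,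
    seq_iden (by grind), add_zero] at h

end Layered

theorem Runs.layered {G : LHyp S} {w w' : List G.V} {A : Multiset G.E} {x : Mor S}
    (h : Runs G w x A w') : Layered G w x A w' := by
  induction h with
  | op e =>
    have h := Layered.cons (e := e) (r := []) (by simpa using Runs.id (G.src e))
      (.nil (by simpa using Runs.id (G.tgt e)))
    rw [iden_seq (by grind), seq_iden (by grind)] at h
    simpa [LHyp.layer] using h
  | id w => exact .nil (.id w)
  | swap a b => exact .nil (.swap a b)
  | seq _ _ ih ih' => exact ih.trans ih'
  | @par w x A w' v y B v' hx hy ih ih' =>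
    rw [mul_eq_mul_iden_seq hx.cod hy.dom]
    exact (ih.mul_iden v).trans (ih'.iden_mul w')

namespace Layered

variable {G : LHyp S} {w w' : List G.V} {A : Multiset G.E} {x y : Mor S}

theorem exists_eq_seq_layer_seq (h : Layered G w x A w') (hA : G.ProducedOnce w A) {e : G.E}
    (he : e ∈ A) (hmin : ∀ v ∈ G.src e, ∀ e' ∈ A, v ∉ G.tgt e') :
    ∃ r p x' B, A = e ::ₘ B ∧ Runs G w p 0 (G.src e ++ r) ∧ Runs G (G.tgt e ++ r) x' B w' ∧
      x = p ⨟ G.layer e r ⨟ x' := by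
  induction h with
  | nil _ => simp at he
  | @cons w p e₁ r x A w' hp hx ih =>
    obtain rfl | hee := eq_or_ne e e₁
    · exact ⟨r, p, x, A, rfl, hp, hx.runs, rfl⟩
    have htail := (hA.perm hp.perm).tail
    obtain ⟨r', q, x', B, rfl, hq, hx', rfl⟩ := ih htail ((Multiset.mem_cons.1 he).resolve_left hee)
      fun v hv e' he' => hmin v hv e' (Multiset.mem_cons_of_mem he')
    obtain ⟨s, p', q', hp', hq', hexch⟩ := hq.exists_layer_exchange htail.nodup
      fun v hv => hmin v hv e₁ (Multiset.mem_cons_self _ _)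
    refine ⟨s, p ⨟ p', q' ⨟ x', e₁ ::ₘ B, Multiset.cons_swap _ _ _, hp.seq_zero hp',
      hq'.seq hx', ?_⟩
    calc p ⨟ G.layer e₁ r ⨟ q ⨟ G.layer e r' ⨟ x'
      _ = p ⨟ (G.layer e₁ r ⨟ q ⨟ G.layer e r') ⨟ x' := by
        simp (disch := grind) only [Mor.seq_assoc]
      _ = (p ⨟ p') ⨟ G.layer e s ⨟ q' ⨟ x' := by
        rw [hexch]
        simp (disch := grind) only [Mor.seq_assoc]

protected theorem unique (hx : Layered G w x A w') (hy : Layered G w y A w')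
    (hA : G.ProducedOnce w A) : x = y := by
  induction hx generalizing y with
  | nil h => exact h.unique_of_nodup hA.nodup hy.runs
  | @cons w p e r x A w' hp hx ih =>
    have hA' := hA.perm hp.perm
    obtain ⟨r', p', y', B, hB, hp', hy', rfl⟩ := hy.exists_eq_seq_layer_seq hA
      (Multiset.mem_cons_self e A) fun v hv e' he' => hA'.notMem_tgt (List.mem_append_left r hv) he'
    obtain rfl := (Multiset.cons_inj_right e).1 hB
    obtain ⟨z, hz⟩ := Runs.exists_of_perm (G := G)
      ((List.perm_append_left_iff _).1 (hp.perm.symm.trans hp'.perm))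
    have hpz : p' = p ⨟ iden S (G.src e).length * z :=
      hp'.unique_of_nodup hA.nodup (hp.seq_zero (hz.id_par _))
    have hzx : x = iden S (G.tgt e).length * z ⨟ y' :=
      ih ((hz.id_par _).zero_seq hy').layered hA'.tail
    calc p ⨟ G.layer e r ⨟ x
      _ = p ⨟ (G.layer e r ⨟ iden S (G.tgt e).length * z) ⨟ y' := by
        rw [hzx, Mor.seq_assoc (by grind) (by grind)]
      _ = p' ⨟ G.layer e r' ⨟ y' := by
        rw [hz.layer_seq_iden_mul, hpz]
        simp (disch := grind) only [Mor.seq_assoc]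

theorem exists_rank (h : Layered G w x A w') (hA : G.ProducedOnce w A) :
    ∃ rank : G.E → ℕ, ∀ e ∈ A, ∀ e' ∈ A, G.Successor e e' → rank e < rank e' := by
  classical
  induction h with
  | nil _ => exact ⟨fun _ => 0, by simp⟩
  | @cons w p e r x A w' hp hx ih =>
    have hA' := hA.perm hp.perm
    obtain ⟨rank, hrank⟩ := ih hA'.tail
    refine ⟨fun e' => if e' = e then 0 else rank e' + 1, ?_⟩
    rintro e₁ he₁ e₂ he₂ ⟨v, hv₁, hv₂⟩
    have hne₂ : e₂ ≠ e := by
      rintro rfl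
      exact hA'.notMem_tgt (List.mem_append_left r hv₂) he₁ hv₁
    obtain rfl | hne₁ := eq_or_ne e₁ e
    · simp [hne₂]
    · simpa [hne₁, hne₂] using hrank e₁ ((Multiset.mem_cons.1 he₁).resolve_left hne₁) e₂
        ((Multiset.mem_cons.1 he₂).resolve_left hne₂) ⟨v, hv₁, hv₂⟩

end Layered

theorem Runs.unique {G : LHyp S} {w w' : List G.V} {A : Multiset G.E} {x y : Mor S}
    (hx : Runs G w x A w') (hy : Runs G w y A w') (hA : G.ProducedOnce w A) : x = y :=
  hx.layered.unique hy.layered hA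

end

section

variable {S : MonSig}

/-- The analogue of `Runs` for terms, by recursion on the term. -/
def TermRuns (G : LHyp S) : {m n : ℕ} → Term S m n → List G.V → Multiset G.E → List G.V → Prop
  | _, _, .op o, w, A, w' => ∃ e, G.label e = o ∧ w = G.src e ∧ A = {e} ∧ w' = G.tgt e
  | _, _, .id n, w, A, w' => w.length = n ∧ A = 0 ∧ w' = w
  | _, _, .symm m n, w, A, w' =>
      ∃ a b, a.length = m ∧ b.length = n ∧ w = a ++ b ∧ A = 0 ∧ w' = b ++ a
  | _, _, .seq t u, w, A, w' => ∃ v A₁ A₂, TermRuns G t w A₁ v ∧ TermRuns G u v A₂ w' ∧ A = A₁ + A₂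
  | _, _, .par t u, w, A, w' => ∃ w₁ w₂ A₁ A₂ w₁' w₂', TermRuns G t w₁ A₁ w₁' ∧
      TermRuns G u w₂ A₂ w₂' ∧ w = w₁ ++ w₂ ∧ A = A₁ + A₂ ∧ w' = w₁' ++ w₂'

theorem exists_eq_append_of_length_eq_add {α : Type*} {m n : ℕ} {w : List α}
    (h : w.length = m + n) : ∃ a b, w = a ++ b ∧ a.length = m ∧ b.length = n :=
  ⟨w.take m, w.drop m, (List.take_append_drop m w).symm, by grind, by grind⟩

namespace TermRuns

variable {G : LHyp S} {m n : ℕ} {t u : Term S m n} {w w' : List G.V} {A : Multiset G.E}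

theorem runs (h : TermRuns G t w A w') : Runs G w (Mor.mk t) A w' := by
  induction t generalizing w A w' with
  | op o =>
    obtain ⟨e, rfl, rfl, rfl, rfl⟩ := h
    exact .op e
  | id n =>
    obtain ⟨rfl, rfl, rfl⟩ := h
    exact .id _
  | symm m n =>
    obtain ⟨a, b, rfl, rfl, rfl, rfl, rfl⟩ := h
    exact .swap a b
  | seq t u ih ih' =>
    obtain ⟨v, A₁, A₂, h₁, h₂, rfl⟩ := h
    rw [← Mor.mk_seq_mk]
    exact (ih h₁).seq (ih' h₂)
  | par t u ih ih' =>
    obtain ⟨w₁, w₂, A₁, A₂, w₁', w₂', h₁, h₂, rfl, rfl, rfl⟩ := h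
    rw [← Mor.mk_mul_mk]
    exact (ih h₁).par (ih' h₂)

theorem length_left (h : TermRuns G t w A w') : w.length = m := h.runs.dom.symm

theorem length_right (h : TermRuns G t w A w') : w'.length = n := h.runs.cod.symm

theorem map {H : LHyp S} (f : LHom G H) (h : TermRuns G t w A w') :
    TermRuns H t (w.map f.nodeMap) (A.map f.edgeMap) (w'.map f.nodeMap) := by
  induction t generalizing w A w' with
  | op o =>
    obtain ⟨e, rfl, rfl, rfl, rfl⟩ := h
    exact ⟨f.edgeMap e, f.label_eq e, (f.src_eq e).symm, by simp, (f.tgt_eq e).symm⟩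
  | id n =>
    obtain ⟨rfl, rfl, rfl⟩ := h
    exact ⟨by simp, by simp, rfl⟩
  | symm m n =>
    obtain ⟨a, b, rfl, rfl, rfl, rfl, rfl⟩ := h
    exact ⟨a.map f.nodeMap, b.map f.nodeMap, by simp, by simp, by simp, by simp, by simp⟩
  | seq t u ih ih' =>
    obtain ⟨v, A₁, A₂, h₁, h₂, rfl⟩ := h
    exact ⟨_, _, _, ih h₁, ih' h₂, by simp⟩
  | par t u ih ih' =>
    obtain ⟨w₁, w₂, A₁, A₂, w₁', w₂', h₁, h₂, rfl, rfl, rfl⟩ := h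
    exact ⟨_, _, _, _, _, _, ih h₁, ih' h₂, by simp, by simp, by simp⟩

theorem cast_iff {m' n' : ℕ} (h₁ : m = m') (h₂ : n = n') :
    TermRuns G (castTerm h₁ h₂ t) w A w' ↔ TermRuns G t w A w' := by
  subst h₁ h₂
  rfl

theorem id_append (h : TermRuns G t w A w') (v : List G.V) {k : ℕ}
    (hv : v.length = k) : TermRuns G ((Term.id k).par t) (v ++ w) A (v ++ w') :=
  ⟨v, w, 0, A, v, w', ⟨hv, rfl, rfl⟩, h, rfl, (zero_add A).symm, rfl⟩

theorem append_id (h : TermRuns G t w A w') (v : List G.V) {k : ℕ}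
    (hv : v.length = k) : TermRuns G (t.par (Term.id k)) (w ++ v) A (w' ++ v) :=
  ⟨w, v, A, 0, w', v, h, ⟨hv, rfl, rfl⟩, rfl, (add_zero A).symm, rfl⟩

theorem seq_assoc_iff {l m n k : ℕ} {t : Term S l m} {u : Term S m n} {v : Term S n k} :
    TermRuns G ((t.seq u).seq v) w A w' ↔ TermRuns G (t.seq (u.seq v)) w A w' := by
  constructor
  · rintro ⟨v₁, A₁, A₂, ⟨v₂, A₃, A₄, h₁, h₂, rfl⟩, h₃, rfl⟩
    exact ⟨_, _, _, h₁, ⟨_, _, _, h₂, h₃, rfl⟩, by rw [add_assoc]⟩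
  · rintro ⟨v₁, A₁, A₂, h₁, ⟨v₂, A₃, A₄, h₂, h₃, rfl⟩, rfl⟩
    exact ⟨_, _, _, ⟨_, _, _, h₁, h₂, rfl⟩, h₃, by rw [add_assoc]⟩

theorem id_seq_iff : TermRuns G ((Term.id m).seq t) w A w' ↔ TermRuns G t w A w' := by
  constructor
  · rintro ⟨v₁, A₁, A₂, ⟨-, rfl, rfl⟩, h, rfl⟩
    simpa using h
  · intro h
    exact ⟨_, _, _, ⟨h.length_left, rfl, rfl⟩, h, by simp⟩

theorem seq_id_iff : TermRuns G (t.seq (Term.id n)) w A w' ↔ TermRuns G t w A w' := by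
  constructor
  · rintro ⟨v₁, A₁, A₂, h, ⟨-, rfl, rfl⟩, rfl⟩
    simpa using h
  · intro h
    exact ⟨_, _, _, h, ⟨h.length_right, rfl, rfl⟩, by simp⟩

theorem par_assoc_iff {m₁ n₁ m₂ n₂ m₃ n₃ : ℕ} {t : Term S m₁ n₁} {u : Term S m₂ n₂}
    {v : Term S m₃ n₃} :
    TermRuns G ((t.par u).par v) w A w' ↔ TermRuns G (t.par (u.par v)) w A w' := by
  constructor
  · rintro ⟨_, w₃, _, A₃, _, w₃', ⟨w₁, w₂, A₁, A₂, w₁', w₂', h₁, h₂, rfl, rfl, rfl⟩, h₃,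
      rfl, rfl, rfl⟩
    exact ⟨_, _, _, _, _, _, h₁, ⟨_, _, _, _, _, _, h₂, h₃, rfl, rfl, rfl⟩,
      by simp, by simp [add_assoc], by simp⟩
  · rintro ⟨w₁, _, A₁, _, w₁', _, h₁, ⟨w₂, w₃, A₂, A₃, w₂', w₃', h₂, h₃, rfl, rfl, rfl⟩,
      rfl, rfl, rfl⟩
    exact ⟨_, _, _, _, _, _, ⟨_, _, _, _, _, _, h₁, h₂, rfl, rfl, rfl⟩, h₃,
      by simp, by simp [add_assoc], by simp⟩

theorem id_zero_par_iff : TermRuns G ((Term.id 0).par t) w A w' ↔ TermRuns G t w A w' := by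
  constructor
  · rintro ⟨w₁, w₂, _, A₂, _, w₂', ⟨h, rfl, rfl⟩, h₂, rfl, rfl, rfl⟩
    obtain rfl := List.length_eq_zero_iff.1 h
    simpa using h₂
  · intro h
    exact h.id_append [] rfl

theorem par_id_zero_iff : TermRuns G (t.par (Term.id 0)) w A w' ↔ TermRuns G t w A w' := by
  constructor
  · rintro ⟨w₁, w₂, A₁, _, w₁', _, h₂, ⟨h, rfl, rfl⟩, rfl, rfl, rfl⟩
    obtain rfl := List.length_eq_zero_iff.1 h
    simpa using h₂
  · intro h
    simpa using h.append_id [] rfl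

theorem interchange_iff {m₁ n₁ p₁ m₂ n₂ p₂ : ℕ} {s : Term S m₁ n₁} {u : Term S n₁ p₁}
    {t : Term S m₂ n₂} {v : Term S n₂ p₂} :
    TermRuns G ((s.seq u).par (t.seq v)) w A w' ↔
      TermRuns G ((s.par t).seq (u.par v)) w A w' := by
  constructor
  · rintro ⟨w₁, w₂, _, _, w₁', w₂', ⟨v₁, A₁, A₂, h₁, h₂, rfl⟩, ⟨v₂, A₃, A₄, h₃, h₄, rfl⟩,
      rfl, rfl, rfl⟩
    exact ⟨_, _, _, ⟨_, _, _, _, _, _, h₁, h₃, rfl, rfl, rfl⟩,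
      ⟨_, _, _, _, _, _, h₂, h₄, rfl, rfl, rfl⟩, by abel⟩
  · rintro ⟨_, _, _, ⟨w₁, w₂, A₁, A₂, v₁, v₂, h₁, h₃, rfl, rfl, rfl⟩,
      ⟨v₁', v₂', A₃, A₄, w₁', w₂', h₂, h₄, hv, rfl, rfl⟩, rfl⟩
    obtain ⟨rfl, rfl⟩ := List.append_inj hv (h₁.length_right.trans h₂.length_left.symm)
    exact ⟨_, _, _, _, _, _, ⟨_, _, _, h₁, h₂, rfl⟩, ⟨_, _, _, h₃, h₄, rfl⟩, rfl, by abel, rfl⟩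

theorem id_par_id_iff :
    TermRuns G ((Term.id m).par (Term.id n)) w A w' ↔ TermRuns G (Term.id (m + n)) w A w' := by
  constructor
  · rintro ⟨w₁, w₂, _, _, _, _, ⟨rfl, rfl, rfl⟩, ⟨rfl, rfl, rfl⟩, rfl, rfl, rfl⟩
    exact ⟨by simp, by simp, rfl⟩
  · rintro ⟨h, rfl, rfl⟩
    obtain ⟨a, b, rfl, ha, hb⟩ := exists_eq_append_of_length_eq_add h
    exact ⟨a, b, 0, 0, a, b, ⟨ha, rfl, rfl⟩, ⟨hb, rfl, rfl⟩, rfl, rfl, rfl⟩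

theorem symm_symm_iff :
    TermRuns G ((Term.symm m n).seq (Term.symm n m)) w A w' ↔
      TermRuns G (Term.id (m + n)) w A w' := by
  constructor
  · rintro ⟨_, _, _, ⟨a, b, ha, hb, rfl, rfl, rfl⟩, ⟨b', a', hb', ha', h, rfl, rfl⟩, rfl⟩
    obtain ⟨rfl, rfl⟩ := List.append_inj h (hb.trans hb'.symm)
    exact ⟨by simp [ha, hb], rfl, rfl⟩
  · rintro ⟨h, rfl, rfl⟩
    obtain ⟨a, b, rfl, ha, hb⟩ := exists_eq_append_of_length_eq_add h
    exact ⟨b ++ a, 0, 0, ⟨a, b, ha, hb, rfl, rfl, rfl⟩, ⟨b, a, hb, ha, rfl, rfl, rfl⟩, rfl⟩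

theorem symm_hexagon_iff {k : ℕ} :
    TermRuns G ((castTerm rfl (Nat.add_assoc n m k) ((Term.symm m n).par (Term.id k))).seq
      ((Term.id n).par (Term.symm m k))) w A w' ↔ TermRuns G (Term.symm m (n + k)) w A w' := by
  constructor
  · rintro ⟨_, _, _, h₁, ⟨b', _, _, _, _, _, ⟨hb', rfl, rfl⟩, ⟨a', c', ha', hc', rfl, rfl, rfl⟩,
      hv, rfl, rfl⟩, rfl⟩
    rw [cast_iff] at h₁
    obtain ⟨_, _, _, _, _, c, ⟨a, b, ha, hb, rfl, rfl, rfl⟩, ⟨hc, rfl, rfl⟩, rfl, rfl, rfl⟩ := h₁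
    rw [List.append_assoc] at hv
    obtain ⟨rfl, hv'⟩ := List.append_inj hv (hb.trans hb'.symm)
    obtain ⟨rfl, rfl⟩ := List.append_inj hv' (ha.trans ha'.symm)
    exact ⟨a, b ++ c, ha, by simp [hb, hc], by simp, by simp, by simp⟩
  · rintro ⟨a, d, ha, hd, rfl, rfl, rfl⟩
    obtain ⟨b, c, rfl, hb, hc⟩ := exists_eq_append_of_length_eq_add hd
    have hab : TermRuns G (Term.symm m n) (a ++ b) 0 (b ++ a) := ⟨a, b, ha, hb, rfl, rfl, rfl⟩
    have hac : TermRuns G (Term.symm m k) (a ++ c) 0 (c ++ a) := ⟨a, c, ha, hc, rfl, rfl, rfl⟩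
    refine ⟨b ++ (a ++ c), 0, 0, (cast_iff rfl _).2 ?_, ?_, rfl⟩
    · simpa only [List.append_assoc] using hab.append_id c hc
    · simpa only [List.append_assoc] using hac.id_append b hb

theorem symm_nat_iff {k : ℕ} :
    TermRuns G ((t.par (Term.id k)).seq (Term.symm n k)) w A w' ↔
      TermRuns G ((Term.symm m k).seq ((Term.id k).par t)) w A w' := by
  constructor
  · rintro ⟨_, _, _, ⟨w₁, w₂, _, _, w₁', _, h, ⟨hw₂, rfl, rfl⟩, rfl, rfl, rfl⟩,
      ⟨b, a, hb, ha, hv, rfl, rfl⟩, rfl⟩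
    obtain ⟨rfl, rfl⟩ := List.append_inj hv (h.length_right.trans hb.symm)
    exact ⟨_, _, _, ⟨w₁, _, h.length_left, hw₂, rfl, rfl, rfl⟩, h.id_append _ hw₂, by simp⟩
  · rintro ⟨_, _, _, ⟨a, b, _, hb, rfl, rfl, rfl⟩,
      ⟨b', a', _, _, _, w₁', ⟨hb', rfl, rfl⟩, h, hv, rfl, rfl⟩, rfl⟩
    obtain ⟨rfl, rfl⟩ := List.append_inj hv (hb.trans hb'.symm)
    exact ⟨_, _, _, h.append_id b hb, ⟨w₁', b, h.length_right, hb, rfl, rfl, rfl⟩, by simp⟩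

theorem congr (h : SMC S t u) : TermRuns G t w A w' ↔ TermRuns G u w A w' := by
  induction h generalizing w A w' with
  | refl t => rfl
  | symm' _ ih => exact ih.symm
  | trans _ _ ih ih' => exact ih.trans ih'
  | seq_congr _ _ ih ih' => simp only [TermRuns, ih, ih']
  | par_congr _ _ ih ih' => simp only [TermRuns, ih, ih']
  | seq_assoc t u v => exact seq_assoc_iff
  | id_seq t => exact id_seq_iff
  | seq_id t => exact seq_id_iff
  | par_assoc t u v => rw [cast_iff, par_assoc_iff]
  | id_zero_par t => rw [cast_iff, id_zero_par_iff]
  | par_id_zero t => exact par_id_zero_iff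
  | interchange s u t v => exact interchange_iff
  | id_par_id m n => exact id_par_id_iff
  | symm_symm m n => exact symm_symm_iff
  | symm_hexagon m n o => rw [cast_iff, symm_hexagon_iff]
  | symm_nat s m => exact symm_nat_iff

end TermRuns

theorem Runs.map {G H : LHyp S} (f : LHom G H) {w x A w'} (h : Runs G w x A w') :
    Runs H (w.map f.nodeMap) x (A.map f.edgeMap) (w'.map f.nodeMap) := by
  induction h with
  | op e => simpa [f.label_eq, f.src_eq, f.tgt_eq] using Runs.op (f.edgeMap e)
  | id w => simpa using Runs.id (w.map f.nodeMap)
  | swap a b => simpa using Runs.swap (a.map f.nodeMap) (b.map f.nodeMap)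
  | seq _ _ ih ih' => simpa using ih.seq ih'
  | par _ _ ih ih' => simpa using ih.par ih'

end

section

variable {S : MonSig} {m n : ℕ}

/-- `s` lists every element of the type `α`, without repetition. -/
def Enumerates {α : Type*} (s : Multiset α) : Prop := s.Nodup ∧ ∀ a, a ∈ s

namespace Enumerates

variable {α β : Type*} {s : Multiset α} {t : Multiset β}

theorem disjSum (hs : Enumerates s) (ht : Enumerates t) : Enumerates (s.disjSum t) := by
  refine ⟨hs.1.disjSum ht.1, ?_⟩
  rintro (a | b)
  · exact Multiset.inl_mem_disjSum.2 (hs.2 a)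
  · exact Multiset.inr_mem_disjSum.2 (ht.2 b)

theorem map_iff (hs : Enumerates s) {f : α → β} :
    Enumerates (s.map f) ↔ Function.Bijective f := by
  rw [Enumerates, Multiset.nodup_map_iff_inj_on hs.1]
  simp [hs.2, Function.Bijective, Function.Injective, Function.Surjective]

end Enumerates

theorem enumerates_finRange (n : ℕ) : Enumerates (List.finRange n : Multiset (Fin n)) :=
  ⟨List.nodup_finRange n, List.mem_finRange⟩

/-- The hyperedges of the interpretation of a term. -/
def Term.edges : {m n : ℕ} → (t : Term S m n) → Multiset (interp t).G.E
  | _, _, .op _ => {()}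
  | _, _, .id _ => 0
  | _, _, .symm _ _ => 0
  | _, _, .seq t u => t.edges.disjSum u.edges
  | _, _, .par t u => t.edges.disjSum u.edges

theorem Term.enumerates_edges (t : Term S m n) : Enumerates t.edges := by
  induction t with
  | op o => exact ⟨Multiset.nodup_singleton _, fun _ => Multiset.mem_singleton_self _⟩
  | id n => exact ⟨Multiset.nodup_zero, fun e => e.elim⟩
  | symm m n => exact ⟨Multiset.nodup_zero, fun e => e.elim⟩
  | seq t u ih ih' => exact ih.disjSum ih'
  | par t u ih ih' => exact ih.disjSum ih'

namespace LCospan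

variable {k l p m₁ n₁ m₂ n₂ : Type} {G : LHyp S}

/-- The inclusion of the first factor in a composite. -/
def compInl (A : LCospan S k l) (B : LCospan S l p) : LHom A.G (A.comp B).G where
  nodeMap v := Quot.mk _ (Sum.inl v)
  edgeMap := Sum.inl
  src_eq _ := rfl
  tgt_eq _ := rfl
  label_eq _ := rfl

/-- The inclusion of the second factor in a composite. -/
def compInr (A : LCospan S k l) (B : LCospan S l p) : LHom B.G (A.comp B).G where
  nodeMap v := Quot.mk _ (Sum.inr v)
  edgeMap := Sum.inr
  src_eq _ := rfl
  tgt_eq _ := rfl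
  label_eq _ := rfl

theorem compInl_comp_out (A : LCospan S k l) (B : LCospan S l p) :
    (A.compInl B).nodeMap ∘ A.out = (A.compInr B).nodeMap ∘ B.inp :=
  funext fun x => Quot.sound ⟨x, rfl, rfl⟩

/-- The map out of a composite induced by compatible maps out of its factors. -/
def compDesc {A : LCospan S k l} {B : LCospan S l p} (φ : LHom A.G G) (ψ : LHom B.G G)
    (h : φ.nodeMap ∘ A.out = ψ.nodeMap ∘ B.inp) : LHom (A.comp B).G G where
  nodeMap := Quot.lift (Sum.elim φ.nodeMap ψ.nodeMap) (by
    rintro _ _ ⟨x, rfl, rfl⟩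
    exact congrFun h x)
  edgeMap := Sum.elim φ.edgeMap ψ.edgeMap
  src_eq := by rintro (e | e) <;> simp [comp, φ.src_eq, ψ.src_eq]
  tgt_eq := by rintro (e | e) <;> simp [comp, φ.tgt_eq, ψ.tgt_eq]
  label_eq := by rintro (e | e) <;> simp [comp, φ.label_eq, ψ.label_eq]

/-- The inclusion of the first factor in a monoidal product. -/
def tensorInl (A : LCospan S m₁ n₁) (B : LCospan S m₂ n₂) : LHom A.G (A.tensor B).G where
  nodeMap := Sum.inl
  edgeMap := Sum.inl
  src_eq _ := rfl
  tgt_eq _ := rfl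
  label_eq _ := rfl

/-- The inclusion of the second factor in a monoidal product. -/
def tensorInr (A : LCospan S m₁ n₁) (B : LCospan S m₂ n₂) : LHom B.G (A.tensor B).G where
  nodeMap := Sum.inr
  edgeMap := Sum.inr
  src_eq _ := rfl
  tgt_eq _ := rfl
  label_eq _ := rfl

/-- The map out of a monoidal product induced by maps out of its factors. -/
def tensorDesc {A : LCospan S m₁ n₁} {B : LCospan S m₂ n₂} (φ : LHom A.G G) (ψ : LHom B.G G) :
    LHom (A.tensor B).G G where
  nodeMap := Sum.elim φ.nodeMap ψ.nodeMap
  edgeMap := Sum.elim φ.edgeMap ψ.edgeMap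
  src_eq := by rintro (e | e) <;> simp [tensor, φ.src_eq, ψ.src_eq]
  tgt_eq := by rintro (e | e) <;> simp [tensor, φ.tgt_eq, ψ.tgt_eq]
  label_eq := by rintro (e | e) <;> simp [tensor, φ.label_eq, ψ.label_eq]

end LCospan

theorem ofFn_castAdd_append_ofFn_natAdd {α : Type*} (f : Fin (m + n) → α) :
    List.ofFn (fun i => f (Fin.castAdd n i)) ++ List.ofFn (fun i => f (Fin.natAdd m i)) =
      List.ofFn f :=
  List.ofFn_add.symm

theorem ofFn_comp_finSumFinEquiv_symm {α : Type*} (f : Fin m ⊕ Fin n → α) :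
    List.ofFn (f ∘ finSumFinEquiv.symm) = List.ofFn (f ∘ Sum.inl) ++ List.ofFn (f ∘ Sum.inr) := by
  simp [← ofFn_castAdd_append_ofFn_natAdd, Function.comp_def]

theorem ofFn_get_cast {α : Type*} (w : List α) (h : n = w.length) :
    List.ofFn (fun i : Fin n => w.get (Fin.cast h i)) = w := by
  subst h
  exact List.ofFn_get w

theorem ofFn_append_get_finAddFlip {α : Type*} (a b : List α) :
    List.ofFn (fun i => (a ++ b).get (Fin.cast List.length_append.symm (finAddFlip i))) =
      b ++ a := by
  simp [← ofFn_castAdd_append_ofFn_natAdd]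

/-- The hyperedge `e`, as a map from the generator it is labelled with. -/
def LHyp.genHom (G : LHyp S) (e : G.E) : LHom (genCospan (G.label e)).G G where
  nodeMap := Sum.elim (fun i => (G.src e).get (Fin.cast (G.src_len e).symm i))
    (fun i => (G.tgt e).get (Fin.cast (G.tgt_len e).symm i))
  edgeMap _ := e
  src_eq _ := by
    conv_lhs => rw [← ofFn_get_cast (G.src e) (G.src_len e).symm]
    simp [genCospan, List.ofFn_eq_map]
  tgt_eq _ := by
    conv_lhs => rw [← ofFn_get_cast (G.tgt e) (G.tgt_len e).symm]
    simp [genCospan, List.ofFn_eq_map]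
  label_eq _ := rfl

theorem termRuns_interp (t : Term S m n) :
    TermRuns (interp t).G t (List.ofFn (interp t).inp) t.edges (List.ofFn (interp t).out) := by
  induction t with
  | op o => exact ⟨(), rfl, List.ofFn_eq_map, rfl, List.ofFn_eq_map⟩
  | id n => exact ⟨List.length_ofFn, rfl, rfl⟩
  | symm m n =>
    refine ⟨_, _, List.length_ofFn, List.length_ofFn,
      (ofFn_castAdd_append_ofFn_natAdd _).symm, rfl,
      (ofFn_castAdd_append_ofFn_natAdd _).symm.trans ?_⟩
    simp [interp, symmLCospan]
  | seq t u ih ih' =>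
    have h₁ := ih.map (LCospan.compInl (interp t) (interp u))
    have h₂ := ih'.map (LCospan.compInr (interp t) (interp u))
    rw [List.map_ofFn, List.map_ofFn] at h₁ h₂
    rw [LCospan.compInl_comp_out] at h₁
    exact ⟨_, _, _, h₁, h₂, rfl⟩
  | par t u ih ih' =>
    have h₁ := ih.map (LCospan.tensorInl (interp t) (interp u))
    have h₂ := ih'.map (LCospan.tensorInr (interp t) (interp u))
    rw [List.map_ofFn, List.map_ofFn] at h₁ h₂
    exact ⟨_, _, _, _, _, _, h₁, h₂, ofFn_comp_finSumFinEquiv_symm _, rfl,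
      ofFn_comp_finSumFinEquiv_symm _⟩

theorem TermRuns.exists_hom {G : LHyp S} {t : Term S m n} {w w' : List G.V} {A : Multiset G.E}
    (h : TermRuns G t w A w') :
    ∃ φ : LHom (interp t).G G, w = List.ofFn (φ.nodeMap ∘ (interp t).inp) ∧
      A = t.edges.map φ.edgeMap ∧ w' = List.ofFn (φ.nodeMap ∘ (interp t).out) := by
  induction t generalizing w A w' with
  | op o =>
    obtain ⟨e, rfl, rfl, rfl, rfl⟩ := h
    exact ⟨G.genHom e, (ofFn_get_cast _ _).symm, rfl, (ofFn_get_cast _ _).symm⟩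
  | id n =>
    obtain ⟨rfl, rfl, rfl⟩ := h
    exact ⟨discreteHom G w'.get, (List.ofFn_get _).symm, rfl, (List.ofFn_get _).symm⟩
  | symm m n =>
    obtain ⟨a, b, rfl, rfl, rfl, rfl, rfl⟩ := h
    exact ⟨discreteHom G fun i => (a ++ b).get (Fin.cast List.length_append.symm i),
      (ofFn_get_cast _ _).symm, rfl, (ofFn_append_get_finAddFlip a b).symm⟩
  | seq t u ih ih' =>
    obtain ⟨v, A₁, A₂, h₁, h₂, rfl⟩ := h
    obtain ⟨φ, rfl, rfl, hv⟩ := ih h₁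
    obtain ⟨ψ, hv', rfl, rfl⟩ := ih' h₂
    exact ⟨LCospan.compDesc φ ψ (List.ofFn_injective (hv.symm.trans hv')), rfl,
      (Multiset.map_disjSum (Sum.elim φ.edgeMap ψ.edgeMap)).symm, rfl⟩
  | par t u ih ih' =>
    obtain ⟨w₁, w₂, A₁, A₂, w₁', w₂', h₁, h₂, rfl, rfl, rfl⟩ := h
    obtain ⟨φ, rfl, rfl, rfl⟩ := ih h₁
    obtain ⟨ψ, rfl, rfl, rfl⟩ := ih' h₂
    let χ := LCospan.tensorDesc φ ψ
    exact ⟨χ, (ofFn_comp_finSumFinEquiv_symm (χ.nodeMap ∘ ((interp t).tensor (interp u)).inp)).symm,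
      (Multiset.map_disjSum (Sum.elim φ.edgeMap ψ.edgeMap)).symm,
      (ofFn_comp_finSumFinEquiv_symm (χ.nodeMap ∘ ((interp t).tensor (interp u)).out)).symm⟩

end

section

variable {S : MonSig}

theorem LHyp.tgts_map {G H : LHyp S} (φ : LHom G H) (A : Multiset G.E) :
    H.tgts (A.map φ.edgeMap) = (G.tgts A).map φ.nodeMap := by
  simp only [LHyp.tgts, Multiset.bind_map, φ.tgt_eq, Multiset.map_bind, Multiset.map_coe]

namespace LCospan

variable {m n p : ℕ}

/-- The inputs of a cospan together with the targets of the hyperedges in `A`. -/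
def produced (C : LCospan S (Fin m) (Fin n)) (A : Multiset C.G.E) : Multiset C.G.V :=
  (List.ofFn C.inp : Multiset C.G.V) + C.G.tgts A

variable {C : LCospan S (Fin m) (Fin n)} {D : LCospan S (Fin n) (Fin p)} {A : Multiset C.G.E}
  {B : Multiset D.G.E}

theorem produced_comp (C : LCospan S (Fin m) (Fin n)) (D : LCospan S (Fin n) (Fin p))
    (A : Multiset C.G.E) (B : Multiset D.G.E) :
    (C.comp D).produced (A.disjSum B) =
      (C.produced A).map (compInl C D).nodeMap + (D.G.tgts B).map (compInr C D).nodeMap := by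
  have hinp : (List.ofFn (C.comp D).inp : Multiset (C.comp D).G.V) =
      (List.ofFn C.inp : Multiset C.G.V).map (compInl C D).nodeMap := by
    rw [Multiset.map_coe, List.map_ofFn]
    rfl
  have htgts : (C.comp D).G.tgts (A.disjSum B) =
      (C.G.tgts A).map (compInl C D).nodeMap + (D.G.tgts B).map (compInr C D).nodeMap :=
    (LHyp.tgts_add _ _).trans
      (congrArg₂ _ (LHyp.tgts_map (compInl C D) A) (LHyp.tgts_map (compInr C D) B))
  simp only [produced, hinp, htgts, Multiset.map_add, add_assoc]

open Classical in
/-- Sends a node of `D` to the node of `C` it is glued to, if there is one. Every other node of the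
composite is sent to itself. -/
noncomputable def compSplit (C : LCospan S (Fin m) (Fin n)) (D : LCospan S (Fin n) (Fin p))
    (hD : Function.Injective D.inp) : (C.comp D).G.V → C.G.V ⊕ D.G.V :=
  Quot.lift (Sum.elim Sum.inl fun v => if h : ∃ k, D.inp k = v then Sum.inl (C.out h.choose)
    else Sum.inr v) (by
      rintro _ _ ⟨k, rfl, rfl⟩
      have h : ∃ k', D.inp k' = D.inp k := ⟨k, rfl⟩
      simp only [Sum.elim_inl, Sum.elim_inr, dif_pos h]
      rw [hD h.choose_spec])

theorem nodup_produced_comp (hC : (C.produced A).Nodup) (hD : (D.produced B).Nodup) :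
    ((C.comp D).produced (A.disjSum B)).Nodup := by
  obtain ⟨hinp, htgts, hdisj⟩ := Multiset.nodup_add.1 hD
  refine Multiset.Nodup.of_map (compSplit C D (List.nodup_ofFn.1 hinp)) ?_
  rw [produced_comp, Multiset.map_add, Multiset.map_map, Multiset.map_map]
  have h := hC.disjSum htgts
  rw [Multiset.disjSum] at h
  convert h using 2
  · rfl
  refine Multiset.map_congr rfl fun v hv => dif_neg ?_
  rintro ⟨k, rfl⟩
  exact Multiset.disjoint_left.1 hdisj (Multiset.mem_coe.2 (List.mem_ofFn.2 ⟨k, rfl⟩)) hv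

theorem mem_produced_comp (hC : ∀ v, v ∈ C.produced A) (hD : ∀ v, v ∈ D.produced B)
    (v : (C.comp D).G.V) : v ∈ (C.comp D).produced (A.disjSum B) := by
  rw [produced_comp, Multiset.mem_add]
  rcases v with ⟨v | v⟩
  · exact .inl (Multiset.mem_map_of_mem _ (hC v))
  · rcases Multiset.mem_add.1 (hD v) with h | h
    · obtain ⟨k, rfl⟩ := List.mem_ofFn.1 (Multiset.mem_coe.1 h)
      exact .inl (Multiset.mem_map.2 ⟨_, hC (C.out k), congrFun (compInl_comp_out C D) k⟩)
    · exact .inr (Multiset.mem_map_of_mem (compInr C D).nodeMap h)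

end LCospan

variable {m n : ℕ}

/-- The nodes of the interpretation of a term, listed as the inputs and the targets of the
hyperedges. -/
def Term.nodes (t : Term S m n) : Multiset (interp t).G.V := (interp t).produced t.edges

theorem Term.nodes_par {m₁ n₁ m₂ n₂ : ℕ} (t : Term S m₁ n₁) (u : Term S m₂ n₂) :
    (t.par u).nodes = t.nodes.disjSum u.nodes := by
  have hinp : (List.ofFn (interp (t.par u)).inp : Multiset (interp (t.par u)).G.V) =
      (List.ofFn (interp t).inp : Multiset _).disjSum (List.ofFn (interp u).inp : Multiset _) := by
    rw [Multiset.disjSum, Multiset.map_coe, Multiset.map_coe, List.map_ofFn, List.map_ofFn,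
      Multiset.coe_add]
    exact congrArg _ (ofFn_comp_finSumFinEquiv_symm (Sum.elim _ _))
  have htgts : (interp (t.par u)).G.tgts (t.par u).edges =
      ((interp t).G.tgts t.edges).disjSum ((interp u).G.tgts u.edges) :=
    (LHyp.tgts_add _ _).trans (congrArg₂ _ (LHyp.tgts_map (LCospan.tensorInl _ _) _)
      (LHyp.tgts_map (LCospan.tensorInr _ _) _))
  rw [nodes, LCospan.produced, hinp, htgts]
  simp only [nodes, LCospan.produced, Multiset.disjSum, Multiset.map_add]
  exact add_add_add_comm (G := Multiset ((interp t).G.V ⊕ (interp u).G.V)) _ _ _ _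

theorem Term.nodes_op (o : S.ops) : (Term.op o).nodes =
    (List.finRange (S.ar o) : Multiset _).disjSum (List.finRange (S.coar o) : Multiset _) :=
  congrArg₂ (fun a b : Multiset (Fin (S.ar o) ⊕ Fin (S.coar o)) => a + b)
    (congrArg _ (List.ofFn_eq_map (f := Sum.inl))) (Multiset.singleton_bind _ _)

theorem Term.enumerates_nodes (t : Term S m n) : Enumerates t.nodes := by
  have enumerates_ofFn_id (k : ℕ) :
      Enumerates (((List.ofFn _root_.id : List (Fin k)) : Multiset (Fin k)) + 0) := by
    rw [add_zero, List.ofFn_id]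
    exact enumerates_finRange k
  induction t with
  | op o =>
    rw [nodes_op]
    exact (enumerates_finRange _).disjSum (enumerates_finRange _)
  | id n => exact enumerates_ofFn_id n
  | symm m n => exact enumerates_ofFn_id (m + n)
  | seq t u ih ih' =>
    exact ⟨LCospan.nodup_produced_comp ih.1 ih'.1, LCospan.mem_produced_comp ih.2 ih'.2⟩
  | par t u ih ih' =>
    rw [nodes_par]
    exact ih.disjSum ih'

theorem Term.nodes_eq (t : Term S m n) :
    t.nodes = (interp t).G.srcs t.edges + (List.ofFn (interp t).out : Multiset (interp t).G.V) :=
  (termRuns_interp t).runs.add_tgts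

end

section

variable {ι κ V E : Type*}

theorem bijective_sumElim_iff {I : ι → V} {g : κ → V} :
    Function.Bijective (Sum.elim I g) ↔ Function.Injective I ∧
      (∀ v ∈ Set.range I, ∀ x, g x ≠ v) ∧ ∀ v ∉ Set.range I, ∃! x, g x = v := by
  rw [Function.Bijective, Sum.elim_injective]
  constructor
  · rintro ⟨⟨hI, hg, hne⟩, hsurj⟩
    refine ⟨hI, ?_, fun v hv => ?_⟩
    · rintro _ ⟨i, rfl⟩ x
      exact (hne i x).symm
    · obtain ⟨i | x, rfl⟩ := hsurj v
      · exact absurd ⟨i, rfl⟩ hv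
      · exact ⟨x, rfl, fun y hy => hg hy⟩
  · rintro ⟨hI, hne, huniq⟩
    refine ⟨⟨hI, fun x y hxy => ?_, fun i x h => hne _ ⟨i, rfl⟩ x h.symm⟩, fun v => ?_⟩
    · exact (huniq (g y) fun h => hne _ h y rfl).unique hxy rfl
    · by_cases hv : v ∈ Set.range I
      · exact ⟨.inl hv.choose, hv.choose_spec⟩
      · exact ⟨.inr (huniq v hv).choose, (huniq v hv).choose_spec.1⟩

/-- The incidences of the lists `τ e`: pairs of some `e` and a position in `τ e`. -/
abbrev Incidence (τ : E → List V) : Type _ := Σ e, Fin (τ e).length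

theorem enumerates_add_bind_iff [Fintype ι] {I : ι → V} {τ : E → List V} {A : Multiset E}
    (hA : Enumerates A) :
    Enumerates (Finset.univ.val.map I + A.bind fun e => (τ e : Multiset V)) ↔
      Function.Bijective (Sum.elim I fun x : Incidence τ => (τ x.1).get x.2) := by
  have hinc : Enumerates (A.sigma fun e => (Finset.univ : Finset (Fin (τ e).length)).val) :=
    ⟨hA.1.sigma fun e => Finset.univ.nodup, fun x =>
      Multiset.mem_sigma.2 ⟨hA.2 _, Finset.mem_univ_val _⟩⟩
  have hι : Enumerates (Finset.univ : Finset ι).val := ⟨Finset.univ.nodup, Finset.mem_univ⟩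
  rw [← (hι.disjSum hinc).map_iff, Multiset.map_disjSum]
  simp [Multiset.sigma, Multiset.map_bind, Function.comp_def]

theorem setOf_getElem?_eq (τ : E → List V) (v : V) :
    {p : E × ℕ | (τ p.1)[p.2]? = some v} =
      (fun x : Incidence τ => (x.1, x.2.1)) '' {x | (τ x.1).get x.2 = v} := by
  ext ⟨e, k⟩
  simp only [Set.mem_ofPred_eq, Set.mem_image, List.getElem?_eq_some_iff]
  constructor
  · rintro ⟨hk, hv⟩
    exact ⟨⟨e, k, hk⟩, hv, rfl⟩
  · rintro ⟨⟨e, k⟩, hv, ⟨⟩⟩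
    exact ⟨k.2, hv⟩

theorem existsUnique_mem_image_iff {f : ι → κ} (hf : Function.Injective f) {s : Set ι} :
    (∃! y, y ∈ f '' s) ↔ ∃! x, x ∈ s := by
  constructor
  · rintro ⟨_, ⟨x, hx, rfl⟩, h⟩
    exact ⟨x, hx, fun y hy => hf (h _ ⟨y, hy, rfl⟩)⟩
  · rintro ⟨x, hx, h⟩
    refine ⟨f x, ⟨x, hx, rfl⟩, ?_⟩
    rintro _ ⟨y, hy, rfl⟩
    exact congrArg f (h y hy)

theorem enumerates_add_bind_iff_degree [Fintype ι] {I : ι → V} {τ : E → List V} {A : Multiset E}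
    (hA : Enumerates A) :
    Enumerates (Finset.univ.val.map I + A.bind fun e => (τ e : Multiset V)) ↔
      Function.Injective I ∧ (∀ v ∈ Set.range I, {p : E × ℕ | (τ p.1)[p.2]? = some v} = ∅) ∧
        ∀ v ∉ Set.range I, ∃! p, p ∈ {p : E × ℕ | (τ p.1)[p.2]? = some v} := by
  have hinj : Function.Injective fun x : Incidence τ => (x.1, x.2.1) := by
    rintro ⟨e, k⟩ ⟨e', k'⟩ h
    obtain ⟨rfl, h⟩ := Prod.mk.inj h
    exact congrArg (Sigma.mk e) (Fin.ext h)
  simp only [enumerates_add_bind_iff hA, bijective_sumElim_iff, setOf_getElem?_eq,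
    existsUnique_mem_image_iff hinj, Set.image_eq_empty]
  simp only [Set.eq_empty_iff_forall_notMem]
  rfl

theorem LCospan.monogamous_iff_enumerates {S : MonSig} {m n : Type} [Fintype m] [Fintype n]
    (C : LCospan S m n) {A : Multiset C.G.E} (hA : Enumerates A) :
    C.Monogamous ↔ Enumerates (Finset.univ.val.map C.inp + C.G.tgts A) ∧
      Enumerates (Finset.univ.val.map C.out + C.G.srcs A) := by
  rw [LHyp.tgts, LHyp.srcs, enumerates_add_bind_iff_degree hA, enumerates_add_bind_iff_degree hA]
  constructor
  · rintro ⟨h₁, h₂, h₃, h₄, h₅, h₆⟩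
    exact ⟨⟨h₁, h₃, h₄⟩, h₂, h₅, h₆⟩
  · rintro ⟨⟨h₁, h₃, h₄⟩, h₂, h₅, h₆⟩
    exact ⟨h₁, h₂, h₃, h₄, h₅, h₆⟩

end

section

variable {i j V W U : Type*} {l : i ⊕ j → U} {c : i ⊕ j → W} {f : U → V} {g : W → V}
  {P : Multiset W} {Q : Multiset U}

theorem bijective_sumElim_of_enumerates (h : Enumerates (P.map g + Q.map f)) :
    Function.Bijective (Sum.elim (fun b : {b // b ∈ P} => g b) fun a : {a // a ∈ Q} => f a) := by
  obtain ⟨hP, hQ, -⟩ := Multiset.nodup_add.1 h.1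
  have hP' : Enumerates P.attach := ⟨Multiset.nodup_attach.2 hP.of_map, P.mem_attach⟩
  have hQ' : Enumerates Q.attach := ⟨Multiset.nodup_attach.2 hQ.of_map, Q.mem_attach⟩
  rw [← (hP'.disjSum hQ').map_iff, Multiset.map_disjSum]
  simpa only [Sum.elim_inl, Sum.elim_inr, Multiset.attach_map_val'] using h

theorem existsUnique_desc_of_enumerates (h₀ : f ∘ l = g ∘ c) (hV : Enumerates (P.map g + Q.map f))
    (hW : ∀ b, b ∈ P ∨ ∃ y, c (.inr y) = b) (hU : ∀ a, a ∈ Q ∨ ∃ x, l (.inl x) = a)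
    (hc : ∀ x, c (.inl x) ∈ P) {T : Type*} (u : U → T) (w : W → T) (h : u ∘ l = w ∘ c) :
    ∃! t : V → T, t ∘ f = u ∧ t ∘ g = w := by
  let ε := Equiv.ofBijective _ (bijective_sumElim_of_enumerates hV)
  let t₀ : {b // b ∈ P} ⊕ {a // a ∈ Q} → T := Sum.elim (fun b => w b) fun a => u a
  let t : V → T := fun v => t₀ (ε.symm v)
  have ht_of_mem {b} (hb : b ∈ P) : t (g b) = w b :=
    congrArg t₀ (ε.symm_apply_apply (.inl ⟨b, hb⟩))
  have htf (a) : t (f a) = u a := by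
    rcases hU a with ha | ⟨x, rfl⟩
    · exact congrArg t₀ (ε.symm_apply_apply (.inr ⟨a, ha⟩))
    · exact (congrArg t (congrFun h₀ _)).trans ((ht_of_mem (hc x)).trans (congrFun h _).symm)
  have htg (b) : t (g b) = w b := by
    rcases hW b with hb | ⟨y, rfl⟩
    · exact ht_of_mem hb
    · exact (congrArg t (congrFun h₀ _).symm).trans ((htf _).trans (congrFun h _))
  refine ⟨t, ⟨funext htf, funext htg⟩, ?_⟩
  rintro s ⟨rfl, rfl⟩
  funext v
  obtain ⟨b | a, rfl⟩ := ε.surjective v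
  · exact (htg b).symm
  · exact (htf a).symm

theorem injective_of_enumerates (h₀ : f ∘ l = g ∘ c) (hV : Enumerates (P.map g + Q.map f))
    (hU : ∀ a, a ∈ Q ∨ ∃ x, l (.inl x) = a) (hc : ∀ x, c (.inl x) ∈ P)
    (hinj : Function.Injective c) : Function.Injective f := by
  obtain ⟨hg, hf, hne⟩ := Sum.elim_injective.1 (bijective_sumElim_of_enumerates hV).1
  have hl (x) : f (l (.inl x)) = g (c (.inl x)) := congrFun h₀ _
  intro a a' h
  rcases hU a with ha | ⟨x, rfl⟩ <;> rcases hU a' with ha' | ⟨x', rfl⟩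
  · exact congrArg Subtype.val (@hf ⟨a, ha⟩ ⟨a', ha'⟩ h)
  · exact absurd ((hl x').symm.trans h.symm) (hne ⟨_, hc x'⟩ ⟨a, ha⟩)
  · exact absurd ((hl x).symm.trans h) (hne ⟨_, hc x⟩ ⟨a', ha'⟩)
  · have hx := @hg ⟨_, hc x⟩ ⟨_, hc x'⟩ ((hl x).symm.trans (h.trans (hl x')))
    rw [hinj (congrArg Subtype.val hx)]

end

section

variable {S : MonSig} {G H : LHyp S}

theorem LHom.ext {f g : LHom G H} (h : f.nodeMap = g.nodeMap) (h' : f.edgeMap = g.edgeMap) :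
    f = g := by
  cases f
  cases g
  congr

theorem isPushout_of_bijective_edgeMap {X : Type} {A B D : LHyp S} {a : X → A.V} {b : X → B.V}
    {f : LHom A D} {g : LHom B D} (h₀ : f.nodeMap ∘ a = g.nodeMap ∘ b)
    (hE : Function.Bijective (Sum.elim f.edgeMap g.edgeMap))
    (hV : ∀ (W : Type) (u : A.V → W) (w : B.V → W), u ∘ a = w ∘ b →
      ∃! t : D.V → W, t ∘ f.nodeMap = u ∧ t ∘ g.nodeMap = w) :
    IsPushout (discreteHom A a) (discreteHom B b) f g := by
  refine ⟨LHom.ext h₀ (funext fun e => e.elim), fun W u w h => ?_⟩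
  obtain ⟨τ, ⟨hτf, hτg⟩, hτ⟩ := hV W.V u.nodeMap w.nodeMap (congrArg LHom.nodeMap h)
  let ε := Equiv.ofBijective _ hE
  have hεf (e) : ε.symm (f.edgeMap e) = .inl e := ε.symm_apply_apply (.inl e)
  have hεg (e) : ε.symm (g.edgeMap e) = .inr e := ε.symm_apply_apply (.inr e)
  let σ : A.E ⊕ B.E → W.E := Sum.elim u.edgeMap w.edgeMap
  let t : LHom D W :=
    { nodeMap := τ
      edgeMap := fun e => σ (ε.symm e)
      src_eq := fun e => by
        obtain ⟨e | e, rfl⟩ := ε.surjective e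
        · simp [ε, σ, f.src_eq, u.src_eq, ← hτf, hεf]
        · simp [ε, σ, g.src_eq, w.src_eq, ← hτg, hεg]
      tgt_eq := fun e => by
        obtain ⟨e | e, rfl⟩ := ε.surjective e
        · simp [ε, σ, f.tgt_eq, u.tgt_eq, ← hτf, hεf]
        · simp [ε, σ, g.tgt_eq, w.tgt_eq, ← hτg, hεg]
      label_eq := fun e => by
        obtain ⟨e | e, rfl⟩ := ε.surjective e
        · simp [ε, σ, f.label_eq, u.label_eq, hεf]
        · simp [ε, σ, g.label_eq, w.label_eq, hεg] }
  refine ⟨t, ⟨LHom.ext hτf (funext fun e => congrArg σ (hεf e)),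
    LHom.ext hτg (funext fun e => congrArg σ (hεg e))⟩, ?_⟩
  rintro s ⟨rfl, rfl⟩
  refine LHom.ext (hτ _ ⟨rfl, rfl⟩) (funext fun e => ?_)
  obtain ⟨e | e, rfl⟩ := ε.surjective e
  · exact (congrArg σ (hεf e)).symm
  · exact (congrArg σ (hεg e)).symm

end

theorem SubHyp.convex_of_forall_notMem {G : Hyp} {H : SubHyp G} {E₁ E₂ : Set G.E}
    (hE : ∀ e, e ∈ E₁ ∨ e ∈ H.edges ∨ e ∈ E₂) (h₁ : ∀ e ∈ E₁, ∀ v ∈ G.src e, v ∉ H.nodes)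
    (h₂ : ∀ e ∈ E₂, ∀ v ∈ G.tgt e, v ∉ H.nodes)
    (h₂₁ : ∀ e ∈ E₂, ∀ e' ∈ E₁, ¬ G.Successor e e') : H.Convex := by
  rintro v hv v' hv' p ⟨hne, hp, hsrc, htgt⟩ e he
  have notMem₁ : e ∉ E₁ := by
    refine List.IsChain.induction (· ∉ E₁) p hp ?_ (fun _ h => h₁ _ h v hsrc hv) e he
    intro x y hxy hx hy
    rcases (hE x).resolve_left hx with hx | hx
    · obtain ⟨u, hu, hu'⟩ := hxy
      exact h₁ y hy u hu' (H.tgt_mem x hx u hu)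
    · exact h₂₁ x hx y hy hxy
  have notMem₂ : e ∉ E₂ := by
    refine List.IsChain.backwards_induction (· ∉ E₂) p hp ?_ (fun _ h => h₂ _ h v' htgt hv') e he
    intro x y hxy hy hx
    rcases or_assoc.2 (hE y) with (hy' | hy') | hy'
    · exact h₂₁ x hx y hy' hxy
    · obtain ⟨u, hu, hu'⟩ := hxy
      exact h₂ x hx u hu (H.src_mem y hy' u hu')
    · exact hy hy'
  exact ((hE e).resolve_left notMem₁).resolve_right notMem₂

theorem univ_val_map_sumElim {V : Type*} {a b : ℕ} (f : Fin a → V) (g : Fin b → V) :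
    (Finset.univ : Finset (Fin a ⊕ Fin b)).val.map (Sum.elim f g) =
      (List.ofFn f ++ List.ofFn g : List V) := by
  rw [← Finset.univ_disjSum_univ, Finset.val_disjSum, Multiset.map_disjSum]
  simp

theorem LCospan.monogamous_sumElim_iff_enumerates {S : MonSig} {a b c d : ℕ} {G : LHyp S}
    {A : Multiset G.E} (hA : Enumerates A) {f : Fin a → G.V} {f' : Fin b → G.V} {g : Fin c → G.V}
    {g' : Fin d → G.V} : (LCospan.mk G (Sum.elim f f') (Sum.elim g g')).Monogamous ↔
      Enumerates (((List.ofFn f ++ List.ofFn f' : List G.V) : Multiset G.V) + G.tgts A) ∧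
      Enumerates (((List.ofFn g ++ List.ofFn g' : List G.V) : Multiset G.V) + G.srcs A) := by
  rw [← univ_val_map_sumElim, ← univ_val_map_sumElim]
  exact LCospan.monogamous_iff_enumerates (LCospan.mk G _ _) hA

section

variable {S : MonSig} {n m i j k : ℕ}

/-- The context consisting of `c₁` and `c₂`, as a term with the ports of the hole moved to the
interfaces. -/
def context (c₁ : Term S n (k + i)) (c₂ : Term S (k + j) m) : Term S (j + n) (m + i) :=
  ((Term.id j).par c₁).seq
    ((castTerm (Nat.add_assoc j k i) rfl ((Term.symm j k).par (Term.id i))).seq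
      (c₂.par (Term.id i)))

theorem TermRuns.context {G : LHyp S} {c₁ : Term S n (k + i)} {c₂ : Term S (k + j) m}
    {v K I J w A₁ A₂} (h₁ : TermRuns G c₁ v A₁ (K ++ I)) (h₂ : TermRuns G c₂ (K ++ J) A₂ w)
    (hK : K.length = k) (hI : I.length = i) (hJ : J.length = j) :
    TermRuns G (SDRT.context c₁ c₂) (J ++ v) (A₁ + A₂) (w ++ I) := by
  refine ⟨_, _, _, h₁.id_append J hJ,
    ⟨K ++ J ++ I, 0, A₂, ?_, h₂.append_id I hI, (zero_add _).symm⟩, rfl⟩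
  rw [TermRuns.cast_iff, ← List.append_assoc]
  have h : TermRuns G (Term.symm j k) (J ++ K) 0 (K ++ J) := ⟨J, K, hJ, hK, rfl, rfl, rfl⟩
  exact h.append_id I hI

theorem TermRuns.exists_of_context {G : LHyp S} {c₁ : Term S n (k + i)} {c₂ : Term S (k + j) m}
    {v w A} (h : TermRuns G (SDRT.context c₁ c₂) v A w) :
    ∃ J N K I M A₁ A₂, v = J ++ N ∧ w = M ++ I ∧ A = A₁ + A₂ ∧ J.length = j ∧ I.length = i ∧
      TermRuns G c₁ N A₁ (K ++ I) ∧ TermRuns G c₂ (K ++ J) A₂ M := by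
  obtain ⟨_, _, _, ⟨_, _, _, _, _, _, ⟨h₁, rfl, rfl⟩, h₂, rfl, rfl, rfl⟩, ⟨_, _, _, h₃,
    ⟨_, _, _, _, _, _, h₄, ⟨h₅, rfl, rfl⟩, rfl, rfl, rfl⟩, rfl⟩, rfl⟩ := h
  rw [TermRuns.cast_iff] at h₃
  obtain ⟨_, _, _, _, _, _, ⟨J, K, hJ, -, rfl, rfl, rfl⟩, ⟨h₆, rfl, rfl⟩, h₇, rfl, h₈⟩ := h₃
  rw [List.append_assoc] at h₇
  obtain ⟨rfl, rfl⟩ := List.append_inj h₇ (h₁.trans hJ.symm)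
  obtain ⟨rfl, rfl⟩ := List.append_inj' h₈ (h₅.trans h₆.symm)
  exact ⟨_, _, _, _, _, _, _, rfl, rfl, by simp, hJ, h₅, h₂, h₄⟩

/-- The ports of the hole of a context. -/
def hole (c₁ : Term S n (k + i)) (c₂ : Term S (k + j) m) :
    Fin i ⊕ Fin j → (interp (context c₁ c₂)).G.V :=
  Sum.elim (fun x => (interp (context c₁ c₂)).out (Fin.natAdd m x))
    (fun y => (interp (context c₁ c₂)).inp (Fin.castAdd n y))

/-- The ports of a context other than those of the hole. -/
def boundary (c₁ : Term S n (k + i)) (c₂ : Term S (k + j) m) :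
    Fin n ⊕ Fin m → (interp (context c₁ c₂)).G.V :=
  Sum.elim (fun x => (interp (context c₁ c₂)).inp (Fin.natAdd j x))
    (fun y => (interp (context c₁ c₂)).out (Fin.castAdd i y))

/-- The nodes of a context other than those produced by the term in its hole. -/
def contextNodes (c₁ : Term S n (k + i)) (c₂ : Term S (k + j) m) :
    Multiset (interp (context c₁ c₂)).G.V :=
  (List.ofFn (boundary c₁ c₂ ∘ Sum.inl) : Multiset _) +
    (interp (context c₁ c₂)).G.tgts (context c₁ c₂).edges

section Context

variable (c₁ : Term S n (k + i)) (c₂ : Term S (k + j) m)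

theorem ofFn_inp_context : List.ofFn (interp (context c₁ c₂)).inp =
    List.ofFn (hole c₁ c₂ ∘ Sum.inr) ++ List.ofFn (boundary c₁ c₂ ∘ Sum.inl) :=
  (ofFn_castAdd_append_ofFn_natAdd _).symm

theorem ofFn_out_context : List.ofFn (interp (context c₁ c₂)).out =
    List.ofFn (boundary c₁ c₂ ∘ Sum.inr) ++ List.ofFn (hole c₁ c₂ ∘ Sum.inl) :=
  (ofFn_castAdd_append_ofFn_natAdd _).symm

theorem nodes_context : (context c₁ c₂).nodes =
    (List.ofFn (hole c₁ c₂ ∘ Sum.inr) : Multiset _) + contextNodes c₁ c₂ := by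
  rw [contextNodes, ← add_assoc, Multiset.coe_add, ← ofFn_inp_context]
  rfl

theorem mem_contextNodes_or_exists_hole (b : (interp (context c₁ c₂)).G.V) :
    b ∈ contextNodes c₁ c₂ ∨ ∃ y, hole c₁ c₂ (.inr y) = b := by
  have hb := (context c₁ c₂).enumerates_nodes.2 b
  rw [nodes_context] at hb
  exact (Multiset.mem_add.1 hb).symm.imp_right fun h => List.mem_ofFn.1 (Multiset.mem_coe.1 h)

theorem hole_inl_mem_contextNodes (x : Fin i) : hole c₁ c₂ (.inl x) ∈ contextNodes c₁ c₂ := by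
  obtain ⟨J, N, K, I, M, A₁, A₂, hv, hw, hA, hJ, hI, h₁, h₂⟩ :=
    (termRuns_interp (context c₁ c₂)).exists_of_context
  rw [ofFn_inp_context] at hv
  rw [ofFn_out_context] at hw
  obtain ⟨rfl, rfl⟩ := List.append_inj hv (by simp [hJ])
  obtain ⟨rfl, rfl⟩ := List.append_inj' hw (by simp [hI])
  have hx : hole c₁ c₂ (.inl x) ∈ K ++ List.ofFn (hole c₁ c₂ ∘ Sum.inl) :=
    List.mem_append_right _ (List.mem_ofFn.2 ⟨x, rfl⟩)
  rw [contextNodes, hA, LHyp.tgts_add, ← add_assoc, h₁.runs.add_tgts]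
  exact Multiset.mem_add.2 (.inl (Multiset.mem_add.2 (.inr (Multiset.mem_coe.2 hx))))

theorem Term.nodup_ofFn_out (t : Term S m n) : (List.ofFn (interp t).out).Nodup := by
  have h := t.enumerates_nodes.1
  rw [t.nodes_eq] at h
  exact (Multiset.nodup_add.1 h).2.1

theorem Term.mem_tgts_or_exists_inp (l : Term S i j) (a : (interp l).G.V) :
    a ∈ (interp l).G.tgts l.edges ∨ ∃ x, (interp l).inp x = a :=
  (Multiset.mem_add.1 (l.enumerates_nodes.2 a)).symm.imp_right fun h =>
    List.mem_ofFn.1 (Multiset.mem_coe.1 h)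

theorem hole_injective : Function.Injective (hole c₁ c₂) := by
  have hnodes := (context c₁ c₂).enumerates_nodes.1
  rw [nodes_context] at hnodes
  obtain ⟨hJ, -, hdisj⟩ := Multiset.nodup_add.1 hnodes
  have hout := (context c₁ c₂).nodup_ofFn_out
  rw [ofFn_out_context] at hout
  rw [← Sum.elim_comp_inl_inr (hole c₁ c₂)]
  refine Sum.elim_injective.2 ⟨List.nodup_ofFn.1 hout.of_append_right,
    List.nodup_ofFn.1 (Multiset.coe_nodup.1 hJ), fun x y h => ?_⟩
  exact Multiset.disjoint_left.1 hdisj (Multiset.mem_coe.2 (List.mem_ofFn.2 ⟨y, h.symm⟩))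
    (hole_inl_mem_contextNodes c₁ c₂ x)

theorem monogamous_context :
    (LCospan.mk (interp (context c₁ c₂)).G
      (Sum.elim (hole c₁ c₂ ∘ Sum.inr) (boundary c₁ c₂ ∘ Sum.inl))
      (Sum.elim (boundary c₁ c₂ ∘ Sum.inr) (hole c₁ c₂ ∘ Sum.inl))).Monogamous := by
  rw [LCospan.monogamous_sumElim_iff_enumerates (context c₁ c₂).enumerates_edges,
    ← ofFn_inp_context, ← ofFn_out_context, add_comm _ (LHyp.srcs _ _), ← Term.nodes_eq]
  exact ⟨(context c₁ c₂).enumerates_nodes, (context c₁ c₂).enumerates_nodes⟩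

end Context

/-- The data presenting the interpretation of `d` as that of `c₁ ; (id ⊕ l) ; c₂`: the map `inner`
of `l` and the map `outer` of the context into it, the hyperedges `before` and `after` of `c₁` and
`c₂`, and the nodes `bypass` carried by the identity next to `l`. -/
structure Plugging (c₁ : Term S n (k + i)) (c₂ : Term S (k + j) m) (l : Term S i j)
    (d : Term S n m) where
  inner : LHom (interp l).G (interp d).G
  outer : LHom (interp (context c₁ c₂)).G (interp d).G
  before : Multiset (interp d).G.E
  after : Multiset (interp d).G.E
  bypass : List (interp d).G.V
  runs_before : TermRuns (interp d).G c₁ (List.ofFn (interp d).inp) before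
    (bypass ++ List.ofFn (inner.nodeMap ∘ (interp l).inp))
  edges_eq : d.edges = before + (l.edges.map inner.edgeMap + after)
  map_edges_context : (context c₁ c₂).edges.map outer.edgeMap = before + after
  glue : inner.nodeMap ∘ Sum.elim (interp l).inp (interp l).out = outer.nodeMap ∘ hole c₁ c₂
  outer_boundary_inl : outer.nodeMap ∘ boundary c₁ c₂ ∘ Sum.inl = (interp d).inp
  outer_boundary_inr : outer.nodeMap ∘ boundary c₁ c₂ ∘ Sum.inr = (interp d).out

variable {c₁ : Term S n (k + i)} {c₂ : Term S (k + j) m} {d : Term S n m} {l : Term S i j}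

theorem nonempty_plugging (h : SMC S d (c₁.seq (((Term.id k).par l).seq c₂))) :
    Nonempty (Plugging c₁ c₂ l d) := by
  obtain ⟨_, A₁, _, h₁, ⟨_, A, A₂, ⟨_, I, _, _, K, J, ⟨hK, rfl, rfl⟩, h₂, rfl, rfl, rfl⟩, h₃, rfl⟩,
    hA⟩ := (TermRuns.congr h).1 (termRuns_interp d)
  rw [zero_add] at hA
  obtain ⟨g, hgi, hgA, hgo⟩ := (h₁.context h₃ hK h₂.length_left h₂.length_right).exists_hom
  obtain ⟨f, rfl, rfl, rfl⟩ := h₂.exists_hom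
  rw [← List.map_ofFn (f := (interp (context c₁ c₂)).inp), ofFn_inp_context,
    List.map_append, List.map_ofFn, List.map_ofFn] at hgi
  rw [← List.map_ofFn (f := (interp (context c₁ c₂)).out), ofFn_out_context,
    List.map_append, List.map_ofFn, List.map_ofFn] at hgo
  obtain ⟨hg₁, hg₂⟩ := List.append_inj hgi (by simp)
  obtain ⟨hg₃, hg₄⟩ := List.append_inj hgo (by simp)
  refine ⟨⟨f, g, A₁, A₂, K, h₁, hA, hgA.symm, ?_, (List.ofFn_injective hg₂).symm,
    (List.ofFn_injective hg₃).symm⟩⟩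
  rw [← Sum.elim_comp_inl_inr (g.nodeMap ∘ hole c₁ c₂), Sum.comp_elim]
  exact congrArg₂ _ (List.ofFn_injective hg₄) (List.ofFn_injective hg₁)

namespace Plugging

variable (p : Plugging c₁ c₂ l d)
include p

theorem edges_eq_add : d.edges =
    l.edges.map p.inner.edgeMap + (context c₁ c₂).edges.map p.outer.edgeMap := by
  rw [p.map_edges_context, p.edges_eq, add_left_comm]

theorem bijective_edgeMap : Function.Bijective (Sum.elim p.inner.edgeMap p.outer.edgeMap) := by
  rw [← (l.enumerates_edges.disjSum (context c₁ c₂).enumerates_edges).map_iff,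
    Multiset.map_disjSum]
  simpa only [Sum.elim_inl, Sum.elim_inr, ← p.edges_eq_add] using d.enumerates_edges

theorem nodes_eq_add : d.nodes = (contextNodes c₁ c₂).map p.outer.nodeMap +
    ((interp l).G.tgts l.edges).map p.inner.nodeMap := by
  rw [contextNodes, Multiset.map_add, Multiset.map_coe, List.map_ofFn, p.outer_boundary_inl,
    ← LHyp.tgts_map, ← LHyp.tgts_map, add_assoc, ← LHyp.tgts_add, add_comm (Multiset.map _ _),
    ← p.edges_eq_add]
  rfl

theorem enumerates_nodes : Enumerates ((contextNodes c₁ c₂).map p.outer.nodeMap +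
    ((interp l).G.tgts l.edges).map p.inner.nodeMap) :=
  p.nodes_eq_add ▸ d.enumerates_nodes

theorem isPushout : IsPushout (discreteHom (interp l).G (Sum.elim (interp l).inp (interp l).out))
    (discreteHom (interp (context c₁ c₂)).G (hole c₁ c₂)) p.inner p.outer :=
  isPushout_of_bijective_edgeMap p.glue p.bijective_edgeMap fun _ =>
    existsUnique_desc_of_enumerates p.glue p.enumerates_nodes
      (mem_contextNodes_or_exists_hole c₁ c₂) l.mem_tgts_or_exists_inp
      (hole_inl_mem_contextNodes c₁ c₂)

theorem inner_nodeMap_injective : Function.Injective p.inner.nodeMap :=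
  injective_of_enumerates p.glue p.enumerates_nodes l.mem_tgts_or_exists_inp
    (hole_inl_mem_contextNodes c₁ c₂) (hole_injective c₁ c₂)

theorem nodes_eq_srcs_add_tgts : d.nodes = (interp d).G.srcs p.before + p.bypass +
    l.nodes.map p.inner.nodeMap + (interp d).G.tgts p.after := by
  have h := p.runs_before.runs.add_tgts
  rw [Term.nodes, LCospan.produced, p.edges_eq, LHyp.tgts_add, LHyp.tgts_add, ← add_assoc, h,
    LHyp.tgts_map, Term.nodes, LCospan.produced, Multiset.map_add, Multiset.map_coe,
    List.map_ofFn, ← Multiset.coe_add]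
  simp only [add_assoc]

theorem convex : p.inner.toHypHom.image.Convex := by
  have h := d.enumerates_nodes.1
  rw [p.nodes_eq_srcs_add_tgts, Multiset.nodup_add, Multiset.nodup_add, Multiset.nodup_add,
    Multiset.disjoint_add_left, Multiset.disjoint_add_left, Multiset.disjoint_add_left] at h
  obtain ⟨⟨-, -, hsrcs, -⟩, -, ⟨hsrcs', -⟩, htgts⟩ := h
  have mem_inner (a) : p.inner.nodeMap a ∈ l.nodes.map p.inner.nodeMap :=
    Multiset.mem_map_of_mem _ (l.enumerates_nodes.2 a)
  refine SubHyp.convex_of_forall_notMem (E₁ := {e | e ∈ p.before}) (E₂ := {e | e ∈ p.after})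
    (fun e => ?_) ?_ ?_ ?_
  · have he := d.enumerates_edges.2 e
    rw [p.edges_eq, Multiset.mem_add, Multiset.mem_add] at he
    exact he.imp_right (Or.imp_left fun he => let ⟨e, _, h⟩ := Multiset.mem_map.1 he; ⟨e, h⟩)
  · rintro e he _ hv ⟨a, rfl⟩
    exact Multiset.disjoint_left.1 hsrcs (LHyp.mem_srcs.2 ⟨e, he, hv⟩) (mem_inner a)
  · rintro e he _ hv ⟨a, rfl⟩
    exact Multiset.disjoint_left.1 htgts (mem_inner a) (LHyp.mem_tgts.2 ⟨e, he, hv⟩)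
  · rintro e he e' he' ⟨v, hv, hv'⟩
    exact Multiset.disjoint_left.1 hsrcs' (LHyp.mem_srcs.2 ⟨e', he', hv'⟩)
      (LHyp.mem_tgts.2 ⟨e, he, hv⟩)

end Plugging

theorem convexStep_of_smc {e : Term S n m} {r : Term S i j}
    (hd : SMC S d (c₁.seq (((Term.id k).par l).seq c₂)))
    (he : SMC S e (c₁.seq (((Term.id k).par r).seq c₂))) :
    ConvexStep (interp l) (interp r) (interp d) (interp e) := by
  obtain ⟨p⟩ := nonempty_plugging hd
  obtain ⟨q⟩ := nonempty_plugging he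
  exact ⟨p.inner, _, hole c₁ c₂, boundary c₁ c₂, p.outer, q.inner, q.outer,
    p.inner_nodeMap_injective, (Sum.elim_injective.1 p.bijective_edgeMap.1).1, p.convex,
    p.isPushout, q.isPushout, congrFun p.outer_boundary_inl, congrFun p.outer_boundary_inr,
    congrFun q.outer_boundary_inl, congrFun q.outer_boundary_inr, hole_injective c₁ c₂,
    monogamous_context c₁ c₂⟩

end

section

variable {S : MonSig} {G H : LHyp S} {w : List G.V} {A : Multiset G.E}

theorem Enumerates.unique {α : Type*} {s t : Multiset α} (hs : Enumerates s) (ht : Enumerates t) :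
    s = t :=
  (Multiset.Nodup.ext hs.1 ht.1).2 fun a => iff_of_true (hs.2 a) (ht.2 a)

theorem Enumerates.exists_of_injective {α β : Type*} {t : Multiset β} (ht : Enumerates t)
    {f : α → β} (hf : Function.Injective f) : ∃ s : Multiset α, Enumerates s := by
  classical
  have : Fintype β := ⟨⟨t, ht.1⟩, ht.2⟩
  have := Fintype.ofInjective f hf
  exact ⟨Finset.univ.val, Finset.univ.nodup, Finset.mem_univ⟩

/-- The hypergraph with a single node and the given labelled hyperedges. A homomorphism to it
amounts to a label-preserving map of hyperedges, so it detects the hyperedges of a pushout. -/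
def bouquet {E : Type} (lab : E → S.ops) : LHyp S where
  V := Unit
  E := E
  src e := List.replicate (S.ar (lab e)) ()
  tgt e := List.replicate (S.coar (lab e)) ()
  label := lab
  src_len e := by simp
  tgt_len e := by simp

/-- The homomorphism to a bouquet given by a label-preserving map of hyperedges. -/
def LHom.toBouquet {E : Type} {lab : E → S.ops} (φ : G.E → E) (h : ∀ e, lab (φ e) = G.label e) :
    LHom G (bouquet lab) where
  nodeMap _ := ()
  edgeMap := φ
  src_eq e := by simp [bouquet, h, ← G.src_len, List.map_const']
  tgt_eq e := by simp [bouquet, h, ← G.tgt_len, List.map_const']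
  label_eq := h

theorem IsPushout.bijective_edgeMap {X : Type} {B P : LHyp S} {a : X → G.V} {b : X → B.V}
    {f : LHom G P} {g : LHom B P} (h : IsPushout (discreteHom G a) (discreteHom B b) f g) :
    Function.Bijective (Sum.elim f.edgeMap g.edgeMap) := by
  obtain ⟨-, h⟩ := h
  constructor
  · obtain ⟨t, ⟨ht, ht'⟩, -⟩ := h (bouquet (Sum.elim G.label B.label))
      (LHom.toBouquet Sum.inl fun _ => rfl) (LHom.toBouquet Sum.inr fun _ => rfl)
      (LHom.ext rfl (funext fun e => e.elim))
    refine Function.LeftInverse.injective (g := t.edgeMap) ?_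
    rintro (e | e)
    · exact congrFun (congrArg LHom.edgeMap ht) e
    · exact congrFun (congrArg LHom.edgeMap ht') e
  · let lab : P.E × Prop → S.ops := fun e => P.label e.1
    let t₁ : LHom P (bouquet lab) := LHom.toBouquet (fun e => (e, True)) fun _ => rfl
    let t₂ : LHom P (bouquet lab) :=
      LHom.toBouquet (fun e => (e, e ∈ Set.range (Sum.elim f.edgeMap g.edgeMap))) fun _ => rfl
    have hf : f.comp t₂ = f.comp t₁ := LHom.ext rfl
      (funext fun e => congrArg (Prod.mk (f.edgeMap e)) (eq_true ⟨.inl e, rfl⟩))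
    have hg : g.comp t₂ = g.comp t₁ := LHom.ext rfl
      (funext fun e => congrArg (Prod.mk (g.edgeMap e)) (eq_true ⟨.inr e, rfl⟩))
    have ht : t₁ = t₂ := (h (bouquet lab) (f.comp t₁) (g.comp t₁)
      (LHom.ext rfl (funext fun e => e.elim))).unique ⟨rfl, rfl⟩ ⟨hf, hg⟩
    intro e
    exact (congrArg Prod.snd (congrFun (congrArg LHom.edgeMap ht) e)).mp trivial

theorem LHom.successor_map (φ : LHom G H) {e e' : G.E} (h : G.Successor e e') :
    H.Successor (φ.edgeMap e) (φ.edgeMap e') := by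
  obtain ⟨v, hv, hv'⟩ := h
  exact ⟨φ.nodeMap v, φ.tgt_eq e ▸ List.mem_map_of_mem hv, φ.src_eq e' ▸ List.mem_map_of_mem hv'⟩

theorem LHom.pathFrom_map (φ : LHom G H) {p : List G.E} {v v' : G.V} (h : G.PathFrom p v v') :
    H.PathFrom (p.map φ.edgeMap) (φ.nodeMap v) (φ.nodeMap v') := by
  obtain ⟨hne, hp, hv, hv'⟩ := h
  refine ⟨by simpa using hne,
    List.isChain_map_of_isChain φ.edgeMap (fun _ _ => φ.successor_map) hp, ?_, ?_⟩
  · rw [List.head_map, φ.src_eq]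
    exact List.mem_map_of_mem hv
  · rw [List.getLast_map, φ.tgt_eq]
    exact List.mem_map_of_mem hv'

theorem IsPushout.not_pathFrom_of_convex {i j : ℕ} {L : LCospan S (Fin i) (Fin j)}
    {D C : LHyp S} {c : Fin i ⊕ Fin j → C.V} {f : LHom L.G D} {g : LHom C D}
    (h : IsPushout (discreteHom L.G (Sum.elim L.inp L.out)) (discreteHom C c) f g)
    (hf : f.toHypHom.image.Convex) (x y p) : ¬ C.PathFrom p (c (.inr y)) (c (.inl x)) := by
  intro hp
  have hc (z) : f.nodeMap (Sum.elim L.inp L.out z) = g.nodeMap (c z) :=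
    congrFun (congrArg LHom.nodeMap h.1) z
  have hgp := g.pathFrom_map hp
  obtain ⟨e, he⟩ := hf _ ⟨_, hc (.inr y)⟩ _ ⟨_, hc (.inl x)⟩ _ hgp _
    (List.mem_map_of_mem (List.head_mem hp.1))
  exact Sum.inl_ne_inr (h.bijective_edgeMap.1 (a₁ := .inl e) (a₂ := .inr _) he)

theorem LHyp.ProducedOnce.exists_perm_src_append (hA : G.ProducedOnce w A) {e : G.E} (he : e ∈ A)
    (hle : G.srcs A ≤ w + G.tgts A) (hmin : ∀ v ∈ G.src e, ∀ e' ∈ A, v ∉ G.tgt e') :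
    ∃ r, w.Perm (G.src e ++ r) := by
  have hsrc : (G.src e : Multiset G.V) ≤ w + G.tgts A := (Multiset.le_bind _ he).trans hle
  have hw : (G.src e : Multiset G.V) ≤ w := by
    refine (Multiset.le_iff_subset (Multiset.nodup_of_le hsrc hA)).2 fun v hv => ?_
    refine (Multiset.mem_add.1 (Multiset.mem_of_le hsrc hv)).resolve_right fun hv' => ?_
    obtain ⟨e', he', hve'⟩ := LHyp.mem_tgts.1 hv'
    exact hmin v hv e' he' hve'
  obtain ⟨r, hr⟩ := Multiset.le_iff_exists_add.1 hw
  exact ⟨r.toList, Multiset.coe_eq_coe.1 (by rw [hr, ← Multiset.coe_add, Multiset.coe_toList])⟩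

theorem Runs.exists_of_rank {w' : List G.V} (hA : G.ProducedOnce w A)
    (h : (w : Multiset G.V) + G.tgts A = G.srcs A + w') (rank : G.E → ℕ)
    (hrank : ∀ e e', G.Successor e e' → rank e < rank e') : ∃ x, Runs G w x A w' := by
  induction hn : A.card generalizing A w with
  | zero =>
    obtain rfl := Multiset.card_eq_zero.1 hn
    exact Runs.exists_of_perm (Multiset.coe_eq_coe.1 (by simpa using h))
  | succ a ih =>
    classical
    obtain ⟨e₀, he₀⟩ := Multiset.card_pos_iff_exists_mem.1 (by rw [hn]; exact a.succ_pos)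
    obtain ⟨e, he, hmin⟩ := A.toFinset.exists_min_image rank ⟨e₀, Multiset.mem_toFinset.2 he₀⟩
    rw [Multiset.mem_toFinset] at he
    obtain ⟨r, hr⟩ := hA.exists_perm_src_append he (h ▸ Multiset.le_add_right _ _)
      fun v hv e' he' hv' =>
        (hrank e' e ⟨v, hv', hv⟩).not_ge (hmin e' (Multiset.mem_toFinset.2 he'))
    obtain ⟨B, rfl⟩ := Multiset.exists_cons_of_mem he
    have hB : ((G.tgt e ++ r : List G.V) : Multiset G.V) + G.tgts B = G.srcs B + w' := by
      refine add_left_cancel (a := (G.src e : Multiset G.V)) ?_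
      calc (G.src e : Multiset G.V) + ((G.tgt e ++ r : List G.V) + G.tgts B)
        _ = (w : Multiset G.V) + G.tgts (e ::ₘ B) := by
          rw [Multiset.coe_eq_coe.2 hr, LHyp.tgts_cons, ← Multiset.coe_add, ← Multiset.coe_add]
          abel
        _ = G.src e + (G.srcs B + w') := by
          rw [h, LHyp.srcs, Multiset.cons_bind, add_assoc]
          rfl
    obtain ⟨x, hx⟩ := ih (hA.perm hr).tail hB (by simpa using hn)
    obtain ⟨p, hp⟩ := Runs.exists_of_perm hr
    exact ⟨_, hp.zero_seq ((Runs.layer e r).seq hx)⟩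

/-- `A₂` consists of the hyperedges reachable from `J`. -/
theorem LHyp.exists_eq_add_of_not_pathFrom (A : Multiset G.E) {I J : List G.V}
    (h : ∀ u ∈ J, ∀ v ∈ I, ∀ p, ¬ G.PathFrom p u v) :
    ∃ A₁ A₂, A = A₁ + A₂ ∧ (∀ v ∈ G.srcs A₁, v ∉ J ∧ v ∉ G.tgts A₂) ∧ ∀ v ∈ I, v ∉ G.tgts A₂ := by
  classical
  let Reachable (e : G.E) : Prop :=
    ∃ e₀, (∃ u ∈ J, u ∈ G.src e₀) ∧ Relation.ReflTransGen G.Successor e₀ e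
  refine ⟨A.filter (¬ Reachable ·), A.filter Reachable, ?_, fun v hv => ?_, fun v hv hv' => ?_⟩
  · rw [add_comm, Multiset.filter_add_not]
  · obtain ⟨e, he, hve⟩ := LHyp.mem_srcs.1 hv
    have hne : ¬ Reachable e := (Multiset.mem_filter.1 he).2
    refine ⟨fun hJ => hne ⟨e, ⟨v, hJ, hve⟩, .refl⟩, fun hv' => ?_⟩
    obtain ⟨e', he', hve'⟩ := LHyp.mem_tgts.1 hv'
    obtain ⟨e₀, he₀, hr⟩ := (Multiset.mem_filter.1 he').2
    exact hne ⟨e₀, he₀, hr.tail ⟨v, hve', hve⟩⟩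
  · obtain ⟨e, he, hve⟩ := LHyp.mem_tgts.1 hv'
    obtain ⟨e₀, ⟨u, hu, hue₀⟩, hr⟩ := (Multiset.mem_filter.1 he).2
    obtain ⟨p, hp, hp', rfl, rfl⟩ := List.exists_isChain_ne_nil_of_relationReflTransGen hr
    exact h u hu v hv p ⟨hp, hp', hue₀, hve⟩

theorem Runs.exists_append_of_rank {N M I J : List G.V} {A₁ A₂ : Multiset G.E}
    (hA : G.ProducedOnce (J ++ N) (A₁ + A₂))
    (h : ((J ++ N : List G.V) : Multiset G.V) + G.tgts (A₁ + A₂) =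
      (M ++ I : List G.V) + G.srcs (A₁ + A₂))
    (hI : ∀ v ∈ I, v ∉ J ∧ v ∉ G.tgts A₂) (hA₁ : ∀ v ∈ G.srcs A₁, v ∉ J ∧ v ∉ G.tgts A₂)
    (rank : G.E → ℕ) (hrank : ∀ e e', G.Successor e e' → rank e < rank e') :
    ∃ K x₁ x₂, Runs G N x₁ A₁ (K ++ I) ∧ Runs G (K ++ J) x₂ A₂ M := by
  have hJN : ((J ++ N : List G.V) : Multiset G.V) + G.tgts (A₁ + A₂) =
      (N + G.tgts A₁) + (J + G.tgts A₂) := by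
    rw [LHyp.tgts_add, ← Multiset.coe_add]
    abel
  have hMI : ((M ++ I : List G.V) : Multiset G.V) + G.srcs (A₁ + A₂) =
      (G.srcs A₁ + I) + (G.srcs A₂ + M) := by
    rw [LHyp.srcs_add, ← Multiset.coe_add]
    abel
  have hin : ((N : Multiset G.V) + G.tgts A₁ + (J + G.tgts A₂)).Nodup := hJN ▸ hA
  rw [hJN, hMI] at h
  have hle : G.srcs A₁ + I ≤ (N : Multiset G.V) + G.tgts A₁ := by
    refine (Multiset.le_iff_subset (Multiset.nodup_add.1 (h ▸ hin)).1).2 fun v hv => ?_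
    have hv' : v ∉ J ∧ v ∉ G.tgts A₂ := (Multiset.mem_add.1 hv).elim (hA₁ v) (hI v)
    have hmem := Multiset.mem_add.1 (h ▸ Multiset.mem_add.2 (.inl hv) :
      v ∈ (N : Multiset G.V) + G.tgts A₁ + (J + G.tgts A₂))
    exact hmem.resolve_right fun h' => (Multiset.mem_add.1 h').elim hv'.1 hv'.2
  obtain ⟨K, hK⟩ := Multiset.le_iff_exists_add.1 hle
  obtain ⟨K, rfl⟩ : ∃ K' : List G.V, K' = K := Quotient.exists_rep K
  have hbefore : (N : Multiset G.V) + G.tgts A₁ = G.srcs A₁ + (K ++ I : List G.V) := by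
    rw [hK, ← Multiset.coe_add, add_assoc, add_comm (I : Multiset G.V)]
  have hafter : ((K ++ J : List G.V) : Multiset G.V) + G.tgts A₂ = G.srcs A₂ + M := by
    refine add_left_cancel (a := G.srcs A₁ + (I : Multiset G.V)) (Eq.trans ?_ h)
    rw [hbefore, ← Multiset.coe_add, ← Multiset.coe_add]
    abel
  obtain ⟨x₁, h₁⟩ := Runs.exists_of_rank (Multiset.nodup_add.1 hin).1 hbefore rank hrank
  have hKJ : G.ProducedOnce (K ++ J) A₂ := by
    rw [LHyp.ProducedOnce, hafter]
    exact (Multiset.nodup_add.1 (h ▸ hin)).2.1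
  obtain ⟨x₂, h₂⟩ := Runs.exists_of_rank hKJ hafter rank hrank
  exact ⟨K, x₁, x₂, h₁, h₂⟩

end

section

variable {S : MonSig} {n m i j k : ℕ} {C : LHyp S} {c : Fin i ⊕ Fin j → C.V}
  {q : Fin n ⊕ Fin m → C.V}

theorem exists_runs_of_monogamous {A : Multiset C.E} (hA : Enumerates A)
    (hc : Function.Injective c)
    (hmono : (LCospan.mk C (Sum.elim (c ∘ Sum.inr) (q ∘ Sum.inl))
      (Sum.elim (q ∘ Sum.inr) (c ∘ Sum.inl))).Monogamous)
    (rank : C.E → ℕ) (hrank : ∀ e e', C.Successor e e' → rank e < rank e')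
    (hpath : ∀ x y p, ¬ C.PathFrom p (c (.inr y)) (c (.inl x))) :
    ∃ K x₁ x₂ A₁ A₂, A = A₁ + A₂ ∧
      Runs C (List.ofFn (q ∘ Sum.inl)) x₁ A₁ (K ++ List.ofFn (c ∘ Sum.inl)) ∧
      Runs C (K ++ List.ofFn (c ∘ Sum.inr)) x₂ A₂ (List.ofFn (q ∘ Sum.inr)) := by
  obtain ⟨hin, hout⟩ := (LCospan.monogamous_sumElim_iff_enumerates hA).1 hmono
  have hI : ∀ v ∈ List.ofFn (c ∘ Sum.inl), v ∉ List.ofFn (c ∘ Sum.inr) := by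
    intro v hv hv'
    obtain ⟨x, rfl⟩ := List.mem_ofFn.1 hv
    obtain ⟨y, hy⟩ := List.mem_ofFn.1 hv'
    exact Sum.inr_ne_inl (hc hy)
  obtain ⟨A₁, A₂, rfl, hA₁, hA₂⟩ := LHyp.exists_eq_add_of_not_pathFrom A
    (I := List.ofFn (c ∘ Sum.inl)) (J := List.ofFn (c ∘ Sum.inr)) fun u hu v hv p => by
      obtain ⟨y, rfl⟩ := List.mem_ofFn.1 hu
      obtain ⟨x, rfl⟩ := List.mem_ofFn.1 hv
      exact hpath x y p
  obtain ⟨K, x₁, x₂, h₁, h₂⟩ := Runs.exists_append_of_rank hin.1 (hin.unique hout)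
    (fun v hv => ⟨hI v hv, hA₂ v hv⟩) hA₁ rank hrank
  exact ⟨K, x₁, x₂, A₁, A₂, rfl, h₁, h₂⟩

theorem smc_of_isPushout {d : Term S n m} {l : Term S i j} {c₁ : Term S n (k + i)}
    {c₂ : Term S (k + j) m} {f : LHom (interp l).G (interp d).G} {g : LHom C (interp d).G}
    {K : List C.V} {A₁ A₂ : Multiset C.E} (hA : Enumerates (A₁ + A₂))
    (hp : IsPushout (discreteHom (interp l).G (Sum.elim (interp l).inp (interp l).out))
      (discreteHom C c) f g)
    (hi : g.nodeMap ∘ q ∘ Sum.inl = (interp d).inp) (ho : g.nodeMap ∘ q ∘ Sum.inr = (interp d).out)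
    (hK : K.length = k)
    (h₁ : Runs C (List.ofFn (q ∘ Sum.inl)) (Mor.mk c₁) A₁ (K ++ List.ofFn (c ∘ Sum.inl)))
    (h₂ : Runs C (K ++ List.ofFn (c ∘ Sum.inr)) (Mor.mk c₂) A₂ (List.ofFn (q ∘ Sum.inr))) :
    SMC S d (c₁.seq (((Term.id k).par l).seq c₂)) := by
  have hglue : f.nodeMap ∘ Sum.elim (interp l).inp (interp l).out = g.nodeMap ∘ c :=
    congrArg LHom.nodeMap hp.1
  have hinp : g.nodeMap ∘ c ∘ Sum.inl = f.nodeMap ∘ (interp l).inp :=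
    congrArg (· ∘ Sum.inl) hglue.symm
  have hout : g.nodeMap ∘ c ∘ Sum.inr = f.nodeMap ∘ (interp l).out :=
    congrArg (· ∘ Sum.inr) hglue.symm
  have hE : d.edges = A₁.map g.edgeMap + (l.edges.map f.edgeMap + A₂.map g.edgeMap) := by
    have h := (l.enumerates_edges.disjSum hA).map_iff.2 hp.bijective_edgeMap
    rw [Multiset.map_disjSum] at h
    simp only [Sum.elim_inl, Sum.elim_inr] at h
    rw [d.enumerates_edges.unique h, Multiset.map_add, add_left_comm]
  have hl := ((termRuns_interp l).map f).runs.id_par (K.map g.nodeMap)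
  have k₁ := h₁.map g
  have k₂ := h₂.map g
  rw [List.map_append, List.map_ofFn, List.map_ofFn, hi, hinp] at k₁
  rw [List.map_append, List.map_ofFn, List.map_ofFn, ho, hout] at k₂
  rw [List.map_ofFn, List.map_ofFn, List.length_map, hK] at hl
  have hrun := k₁.seq (hl.seq k₂)
  rw [← hE, Mor.iden, Mor.mk_mul_mk, Mor.mk_seq_mk, Mor.mk_seq_mk] at hrun
  exact Mor.mk_eq_mk.1 ((termRuns_interp d).runs.unique hrun d.enumerates_nodes.1)

theorem exists_smc_of_convexStep {d e : Term S n m} {l r : Term S i j}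
    (h : ConvexStep (interp l) (interp r) (interp d) (interp e)) :
    ∃ (k : ℕ) (c₁ : Term S n (k + i)) (c₂ : Term S (k + j) m),
      SMC S d (c₁.seq (((Term.id k).par l).seq c₂)) ∧
      SMC S e (c₁.seq (((Term.id k).par r).seq c₂)) := by
  obtain ⟨f, C, c, q, g, f', g', -, -, hconv, hp, hp', hi, ho, hi', ho', hc, hmono⟩ := h
  obtain ⟨A, hA⟩ := d.enumerates_edges.exists_of_injective
    (Sum.elim_injective.1 hp.bijective_edgeMap.1).2.1
  obtain ⟨rank, hrank⟩ := (termRuns_interp d).runs.layered.exists_rank d.enumerates_nodes.1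
  obtain ⟨K, x₁, x₂, A₁, A₂, rfl, h₁, h₂⟩ := exists_runs_of_monogamous hA hc hmono
    (rank ∘ g.edgeMap) (fun a b h => hrank _ (d.enumerates_edges.2 _) _ (d.enumerates_edges.2 _)
      (g.successor_map h)) (hp.not_pathFrom_of_convex hconv)
  obtain ⟨_, _, c₁, rfl⟩ := Mor.exists_rep x₁
  obtain ⟨_, _, c₂, rfl⟩ := Mor.exists_rep x₂
  obtain rfl : _ = n := h₁.dom.trans (by simp)
  obtain rfl : _ = K.length + i := h₁.cod.trans (by simp)
  obtain rfl : _ = K.length + j := h₂.dom.trans (by simp)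
  obtain rfl : _ = m := h₂.cod.trans (by simp)
  exact ⟨K.length, c₁, c₂, smc_of_isPushout hA hp (funext hi) (funext ho) rfl h₁ h₂,
    smc_of_isPushout hA hp' (funext hi') (funext ho') rfl h₁ h₂⟩

end

/-- **Adequacy of convex DPO rewriting.** For a rewriting system `R`
on `Σ`-terms and terms `d, e : n → m`, the syntactic rewriting `d ⇒_R e` (modulo
the SMC laws) holds if and only if the interfaced hypergraph obtained from `⟦d⟧`
rewrites convexly to the one obtained from `⟦e⟧` via the DPO rule
`⟦l⟧ ← i+j → ⟦r⟧` for some rule `(l, r)` in `R`. -/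
theorem adequacy {S : MonSig} (R : TermRules S) {n m : ℕ} (d e : Term S n m) :
    SynStep R d e ↔
      ∃ (i j : ℕ) (l r : Term S i j), (⟨i, j, (l, r)⟩ ∈ R) ∧
        ConvexStep (interp l) (interp r) (interp d) (interp e) := by
  constructor
  · rintro ⟨i, j, l, r, hR, k, c₁, c₂, hd, he⟩
    exact ⟨i, j, l, r, hR, convexStep_of_smc hd he⟩
  · rintro ⟨i, j, l, r, hR, h⟩
    exact ⟨i, j, l, r, hR, exists_smc_of_convexStep h⟩

end SDRT
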